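/- No packing of unit balls in Euclidean space ℝ⁸ has density greater than that of the E8-lattice packing; that is, every sphere packing P ⊂ ℝ⁸ satisfies Δ_P ≤ π⁴/384. -/

import Mathlib

namespace SP8
open Complex Filter Topology Asymptotics
open scoped MatrixGroups ModularForm Manifold

local notation "I∞" => Filter.comap Complex.im Filter.atTop

lemma im_inv_pos {z : ℂ} (hz : 0 < z.im) : 0 < (-1 / z).im := by
  have : z ≠ 0 := fun h => by simp [h] at hz
  rw [neg_div, one_div, neg_im, inv_im, neg_div, neg_neg]
  exact div_pos hz (normSq_pos.2 this)

lemma ne0 {z : ℂ} (hz : 0 < z.im) : z ≠ 0 := fun h => by simp [h] at hz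

lemma Hopen : IsOpen {z : ℂ | 0 < z.im} := isOpen_lt continuous_const continuous_im

lemma vanish (f : ℂ → ℂ) (k : ℕ) (hk : k < 12) (hd : ∀ z : ℂ, 0 < z.im → DifferentiableAt ℂ f z)
    (hT : ∀ z : ℂ, 0 < z.im → f (z + 1) = f z)
    (hS : ∀ z : ℂ, 0 < z.im → f (-1 / z) = z ^ k * f z)
    (h0 : Tendsto f I∞ (𝓝 0)) (z : ℂ) (hz : 0 < z.im) : f z = 0 := by
  let g : UpperHalfPlane → ℂ := fun τ => f τ
  have gS : g ∣[(k : ℤ)] ModularGroup.S = g := by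
    ext τ
    rw [ModularForm.SL_slash_apply, ModularGroup.denom_S, UpperHalfPlane.modular_S_smul]
    have := hS τ τ.2
    have h1 : ((-(τ : ℂ))⁻¹) = -1 / (τ : ℂ) := by rw [inv_neg]; ring
    simp only [g, h1, this]
    have := ne0 τ.2
    rw [zpow_neg, zpow_natCast]; field_simp
  have gT : g ∣[(k : ℤ)] ModularGroup.T = g := by
    ext τ
    rw [ModularForm.SL_slash_apply, UpperHalfPlane.modular_T_smul]
    simp only [g]
    have : ((1 : ℝ) +ᵥ τ : UpperHalfPlane) = (τ : ℂ) + 1 := by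
      rw [UpperHalfPlane.coe_vadd]; push_cast; ring
    rw [this, hT τ τ.2]
    simp [UpperHalfPlane.denom, ModularGroup.coe_T]
  have gA := SlashInvariantForm.slash_action_generators_SL2Z gS gT
  have gz : UpperHalfPlane.IsZeroAtImInfty g := by
    refine h0.comp ?_
    rw [tendsto_comap_iff]
    exact tendsto_comap
  let G : CuspForm 𝒮ℒ (k : ℤ) :=
    { toFun := g
      slash_action_eq' := by
        rintro A ⟨A, rfl⟩
        exact gA A
      holo' := by
        rw [UpperHalfPlane.mdifferentiable_iff]
        refine DifferentiableOn.congr (f := f) (fun w hw => (hd w hw).differentiableWithinAt) ?_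
        intro w hw
        change g (UpperHalfPlane.ofComplex w) = f w
        rw [UpperHalfPlane.ofComplex_apply_of_im_pos hw]
      zero_at_cusps' := by
        intro c hc
        rw [Subgroup.IsArithmetic.isCusp_iff_isCusp_SL2Z] at hc
        rw [OnePoint.isZeroAt_iff_forall_SL2Z hc]
        intro γ _
        rw [gA]
        exact gz }
  have hG : G = 0 := rank_zero_iff_forall_zero.mp
    (CuspForm.rank_eq_zero_of_weight_lt_twelve (by exact_mod_cast hk)) G
  have := congrArg (fun (F : CuspForm 𝒮ℒ (k : ℤ)) => F (⟨z, hz⟩ : UpperHalfPlane)) hG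
  exact this

/-- periodic bounded holomorphic functions have a limit with exponential rate -/
lemma per_lim (f : ℂ → ℂ) {h : ℝ} (hh : 0 < h)
    (hd : ∀ z : ℂ, 0 < z.im → DifferentiableAt ℂ f z)
    (hT : ∀ z : ℂ, 0 < z.im → f (z + h) = f z) (hb : f =O[I∞] (fun _ => (1 : ℝ))) :
    ∃ c, (fun z => f z - c) =O[I∞] (fun z => Real.exp (-2 * Real.pi * z.im / h)) := by
  classical
  let g : ℂ → ℂ := fun z => if 0 < z.im then f z else 0
  have hpos : ∀ᶠ z : ℂ in I∞, 0 < z.im := tendsto_comap.eventually (eventually_gt_atTop 0)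
  have hgf : g =ᶠ[I∞] f := hpos.mono fun z hz => by simp [g, hz]
  have hgp : Function.Periodic g h := fun z => by
    by_cases hz : 0 < z.im
    · simp [g, hz, hT z hz]
    · simp [g, hz]
  refine ⟨Function.Periodic.cuspFunction h g 0, ?_⟩
  refine (Function.Periodic.exp_decay_sub_of_bounded_at_inf hh hgp ?_ ?_).congr' ?_ EventuallyEq.rfl
  · refine hpos.mono fun z hz => (hd z hz).congr_of_eventuallyEq ?_
    filter_upwards [Hopen.mem_nhds hz] with w hw
    exact if_pos hw
  · exact (hb.congr' hgf.symm EventuallyEq.rfl).congr_right (fun _ => rfl)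
  · filter_upwards [hgf] with z hz
    rw [hz]

/-- derivatives of functions with a limit at infinity tend to zero -/
lemma deriv_lim (f : ℂ → ℂ) (c : ℂ) (hd : ∀ z : ℂ, 0 < z.im → DifferentiableAt ℂ f z)
    (hl : Tendsto f I∞ (𝓝 c)) : Tendsto (deriv f) I∞ (𝓝 0) := by
  rw [Metric.tendsto_nhds] at hl ⊢
  intro ε he
  have h1 := hl (ε / 2) (half_pos he)
  rw [eventually_comap, eventually_atTop] at h1
  obtain ⟨A, hA⟩ := h1
  rw [eventually_comap, eventually_atTop]
  refine ⟨max A 0 + 2, fun y hy z hz => ?_⟩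
  have hm := le_max_left A 0
  have hm0 := le_max_right A 0
  have him : ∀ w ∈ Metric.closedBall z 1, max A 0 ≤ w.im ∧ 0 < w.im := by
    intro w hw
    rw [Metric.mem_closedBall, dist_eq] at hw
    have := (abs_le.1 ((abs_im_le_norm (w - z)).trans hw)).1
    rw [sub_im] at this
    constructor <;> linarith
  have hcl : DiffContOnCl ℂ (fun w => f w - c) (Metric.ball z 1) := by
    refine DifferentiableOn.diffContOnCl_ball (U := Metric.closedBall z 1) ?_ subset_rfl
    exact fun w hw => ((hd w (him w hw).2).sub_const c).differentiableWithinAt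
  have h2 := Complex.norm_deriv_le_of_forall_mem_sphere_norm_le (C := ε / 2) one_pos hcl ?_
  · rw [deriv_sub_const] at h2
    rw [dist_zero_right]; linarith
  · intro w hw
    have := hA w.im (hm.trans (him w (Metric.sphere_subset_closedBall hw)).1) w rfl
    rw [dist_eq] at this
    exact this.le

/-- truncations of `q`-series -/
lemma qtrunc (f : ℂ → ℂ) (c : ℕ → ℂ) {h : ℝ} (hh : 0 < h)
    (hf : ∀ z : ℂ, 0 < z.im → HasSum (fun m => c m * cexp (2 * Real.pi * I * z / h) ^ m) (f z))
    (N : ℕ) : (fun z => f z - ∑ m ∈ Finset.range N, c m * cexp (2 * Real.pi * I * z / h) ^ m)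
      =O[I∞] (fun z => cexp (2 * Real.pi * I * z / h) ^ N) := by
  have h1 := (hf I (by simp)).summable.norm
  have h1' := (summable_nat_add_iff N).2 h1
  set r := ‖cexp (2 * Real.pi * I * I / h)‖ with hr
  have hr0 : 0 < r := norm_pos_iff.2 (exp_ne_zero _)
  have key : ∀ z : ℂ, ‖cexp (2 * Real.pi * I * z / h)‖ = Real.exp (-(2 * Real.pi * z.im / h)) := by
    intro z
    rw [norm_exp]
    congr 1
    rw [div_ofReal_re]
    simp [neg_div]
  refine IsBigO.of_bound ((∑' m, ‖c (m + N) * cexp (2 * Real.pi * I * I / h) ^ (m + N)‖) / r ^ N) ?_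
  filter_upwards [tendsto_comap.eventually (eventually_ge_atTop (1 : ℝ))] with z hz
  have hz0 : 0 < z.im := by linarith
  have h2 := (hasSum_nat_add_iff' N).2 (hf z hz0)
  have hle : ‖cexp (2 * Real.pi * I * z / h)‖ ≤ r := by
    rw [hr, key, key, I_im]
    gcongr
  rw [← h2.tsum_eq, div_mul_eq_mul_div, le_div_iff₀ (by positivity), ← tsum_mul_right]
  rw [mul_comm]
  have h3 := tsum_of_norm_bounded (f := fun m => (r : ℂ) ^ N * (c (m + N) * cexp (2 * Real.pi * I * z / h) ^ (m + N)))
    (h1'.mul_right ‖cexp (2 * Real.pi * I * z / h) ^ N‖).hasSum ?_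
  · rw [tsum_mul_left, norm_mul, norm_pow, norm_real, Real.norm_of_nonneg hr0.le] at h3
    exact h3
  intro m
  simp only [norm_mul, norm_pow, norm_real, Real.norm_of_nonneg hr0.le]
  set s := ‖cexp (2 * Real.pi * I * z / h)‖ with hs
  have hs0 : 0 ≤ s := norm_nonneg _
  have : s ^ m ≤ r ^ m := pow_le_pow_left₀ hs0 hle m
  calc r ^ N * (‖c (m + N)‖ * s ^ (m + N)) = (‖c (m + N)‖ * r ^ N * s ^ N) * s ^ m := by ring
    _ ≤ (‖c (m + N)‖ * r ^ N * s ^ N) * r ^ m := by gcongr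
    _ = _ := by ring

end SP8


namespace SP8
open Complex Filter Topology Asymptotics
open scoped MatrixGroups ModularForm Manifold

local notation "I∞" => Filter.comap Complex.im Filter.atTop

noncomputable def e2 (z : ℂ) : ℂ := EisensteinSeries.E2 (UpperHalfPlane.ofComplex z)
noncomputable def e4 (z : ℂ) : ℂ := ModularForm.E₄ (UpperHalfPlane.ofComplex z)
noncomputable def e6 (z : ℂ) : ℂ := ModularForm.E₆ (UpperHalfPlane.ofComplex z)

lemma e2_diff (z : ℂ) (hz : 0 < z.im) : DifferentiableAt ℂ e2 z :=
  (UpperHalfPlane.mdifferentiable_iff.1 E2_mdifferentiable).differentiableAt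
    (Hopen.mem_nhds hz)
lemma e4_diff (z : ℂ) (hz : 0 < z.im) : DifferentiableAt ℂ e4 z :=
  (UpperHalfPlane.mdifferentiable_iff.1 ModularForm.E₄.holo').differentiableAt
    (Hopen.mem_nhds hz)
lemma e6_diff (z : ℂ) (hz : 0 < z.im) : DifferentiableAt ℂ e6 z :=
  (UpperHalfPlane.mdifferentiable_iff.1 ModularForm.E₆.holo').differentiableAt
    (Hopen.mem_nhds hz)

lemma ofC_S (z : ℂ) (hz : 0 < z.im) : UpperHalfPlane.ofComplex (-1 / z) =
    ModularGroup.S • UpperHalfPlane.ofComplex z := by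
  rw [UpperHalfPlane.ofComplex_apply_of_im_pos (im_inv_pos hz), UpperHalfPlane.modular_S_smul,
    UpperHalfPlane.ofComplex_apply_of_im_pos hz]
  ext
  simp [neg_div, inv_neg]

lemma ofC_T (z : ℂ) (hz : 0 < z.im) : UpperHalfPlane.ofComplex (z + 1) =
    ModularGroup.T • UpperHalfPlane.ofComplex z := by
  rw [UpperHalfPlane.ofComplex_apply_of_im_pos (by simpa using hz), UpperHalfPlane.modular_T_smul,
    UpperHalfPlane.ofComplex_apply_of_im_pos hz]
  ext
  simp [add_comm]

lemma slashS {f : UpperHalfPlane → ℂ} {k : ℕ} {z : ℂ} (hz : 0 < z.im) :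
    f (UpperHalfPlane.ofComplex (-1 / z)) =
      z ^ k * (f ∣[(k : ℤ)] ModularGroup.S) (UpperHalfPlane.ofComplex z) := by
  rw [ModularForm.SL_slash_apply, ModularGroup.denom_S, ofC_S z hz,
    UpperHalfPlane.ofComplex_apply_of_im_pos hz]
  have := ne0 hz
  simp only [zpow_neg, zpow_natCast]
  field_simp

lemma slashT {f : UpperHalfPlane → ℂ} {k : ℕ} {z : ℂ} (hz : 0 < z.im) :
    f (UpperHalfPlane.ofComplex (z + 1)) =
      (f ∣[(k : ℤ)] ModularGroup.T) (UpperHalfPlane.ofComplex z) := by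
  rw [ModularForm.SL_slash_apply, ofC_T z hz]
  simp [UpperHalfPlane.denom, ModularGroup.coe_T]

lemma e2_S (z : ℂ) (hz : 0 < z.im) : e2 (-1 / z) = z ^ 2 * e2 z - 6 * I / Real.pi * z := by
  have h := slashS (f := EisensteinSeries.E2) (k := 2) hz
  push_cast at h
  rw [EisensteinSeries.E2_slash_action] at h
  simp only [Pi.sub_apply, Pi.smul_apply, EisensteinSeries.D2_S, riemannZeta_two, smul_eq_mul] at h
  rw [e2, h, e2]
  have : ((UpperHalfPlane.ofComplex z : UpperHalfPlane) : ℂ) = z := by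
    rw [UpperHalfPlane.ofComplex_apply_of_im_pos hz]
  rw [this]
  have := ne0 hz
  have hp : (Real.pi : ℂ) ≠ 0 := by exact_mod_cast Real.pi_ne_zero
  field_simp

lemma e2_T (z : ℂ) (hz : 0 < z.im) : e2 (z + 1) = e2 z := by
  have h := slashT (f := EisensteinSeries.E2) (k := 2) hz
  push_cast at h
  rw [EisensteinSeries.E2_slash_action, EisensteinSeries.D2_T] at h
  rw [e2, e2]
  simpa using h

lemma e4_S (z : ℂ) (hz : 0 < z.im) : e4 (-1 / z) = z ^ 4 * e4 z := by
  have h := slashS (f := ModularForm.E₄) (k := 4) hz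
  have h1 : (⇑ModularForm.E₄ ∣[((4 : ℕ) : ℤ)] ModularGroup.S) = ⇑ModularForm.E₄ :=
    ModularForm.E₄.slash_action_eq' _ ⟨_, rfl⟩
  rwa [h1] at h
lemma e4_T (z : ℂ) (hz : 0 < z.im) : e4 (z + 1) = e4 z := by
  have h := slashT (f := ModularForm.E₄) (k := 4) hz
  have h1 : (⇑ModularForm.E₄ ∣[((4 : ℕ) : ℤ)] ModularGroup.T) = ⇑ModularForm.E₄ :=
    ModularForm.E₄.slash_action_eq' _ ⟨_, rfl⟩
  rwa [h1] at h
lemma e6_S (z : ℂ) (hz : 0 < z.im) : e6 (-1 / z) = z ^ 6 * e6 z := by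
  have h := slashS (f := ModularForm.E₆) (k := 6) hz
  have h1 : (⇑ModularForm.E₆ ∣[((6 : ℕ) : ℤ)] ModularGroup.S) = ⇑ModularForm.E₆ :=
    ModularForm.E₆.slash_action_eq' _ ⟨_, rfl⟩
  rwa [h1] at h
lemma e6_T (z : ℂ) (hz : 0 < z.im) : e6 (z + 1) = e6 z := by
  have h := slashT (f := ModularForm.E₆) (k := 6) hz
  have h1 : (⇑ModularForm.E₆ ∣[((6 : ℕ) : ℤ)] ModularGroup.T) = ⇑ModularForm.E₆ :=
    ModularForm.E₆.slash_action_eq' _ ⟨_, rfl⟩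
  rwa [h1] at h

noncomputable def sg (m : ℕ) : ℕ := ArithmeticFunction.sigma 1 m
lemma e2_sum (z : ℂ) (hz : 0 < z.im) :
    HasSum (fun m => (if m = 0 then 1 else -24 * (sg m : ℂ)) * cexp (2 * Real.pi * I * z / (1 : ℝ)) ^ m) (e2 z) := by
  have h := EisensteinSeries.hasSum_qExpansion_E2 (z := ⟨z, hz⟩)
  rw [e2, UpperHalfPlane.ofComplex_apply_of_im_pos hz]
  simpa [sg] using h

lemma e4_sum (z : ℂ) (hz : 0 < z.im) :
    HasSum (fun m => (UpperHalfPlane.qExpansion 1 ModularForm.E₄).coeff m * cexp (2 * Real.pi * I * z / (1 : ℝ)) ^ m) (e4 z) := by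
  have h := ModularForm.hasSum_qExpansion (h := 1) (f := ModularForm.E₄) one_pos one_mem_strictPeriods_SL ⟨z, hz⟩
  rw [e4, UpperHalfPlane.ofComplex_apply_of_im_pos hz]
  simpa [Function.Periodic.qParam] using h
lemma e6_sum (z : ℂ) (hz : 0 < z.im) :
    HasSum (fun m => (UpperHalfPlane.qExpansion 1 ModularForm.E₆).coeff m * cexp (2 * Real.pi * I * z / (1 : ℝ)) ^ m) (e6 z) := by
  have h := ModularForm.hasSum_qExpansion (h := 1) (f := ModularForm.E₆) one_pos one_mem_strictPeriods_SL ⟨z, hz⟩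
  rw [e6, UpperHalfPlane.ofComplex_apply_of_im_pos hz]
  simpa [Function.Periodic.qParam] using h

noncomputable def p (z : ℂ) : ℂ := cexp (Real.pi * I * z)
lemma p_ne (z : ℂ) : p z ≠ 0 := exp_ne_zero _
lemma p_add_one (z : ℂ) : p (z + 1) = - p z := by
  rw [p, p, mul_add, exp_add, mul_one, exp_pi_mul_I]; ring
lemma p_norm (z : ℂ) : ‖p z‖ = Real.exp (-Real.pi * z.im) := by
  rw [p, norm_exp]; simp
lemma q_eq (z : ℂ) : cexp (2 * Real.pi * I * z / (1 : ℝ)) = p z ^ 2 := by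
  rw [p, ← exp_nat_mul]; congr 1; push_cast; ring

lemma p_lim : Tendsto p I∞ (𝓝 0) := by
  rw [tendsto_zero_iff_norm_tendsto_zero]
  simp only [p_norm]
  refine Real.tendsto_exp_atBot.comp ?_
  exact tendsto_comap.const_mul_atTop_of_neg (by simpa using Real.pi_pos)

lemma e2_as : (fun z => e2 z - (1 - 24 * p z ^ 2)) =O[I∞] (fun z => p z ^ 4) := by
  have h := qtrunc e2 _ one_pos e2_sum 2
  simp only [q_eq] at h
  refine h.congr (fun z => ?_) (fun z => by ring)
  simp [Finset.sum_range_succ, sg]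
  ring
lemma e4_as : (fun z => e4 z - (1 + 240 * p z ^ 2)) =O[I∞] (fun z => p z ^ 4) := by
  have h := qtrunc e4 _ one_pos e4_sum 2
  simp only [q_eq] at h
  refine h.congr (fun z => ?_) (fun z => by ring)
  have := EisensteinSeries.E_qExpansion_coeff_zero (k := 4) (by norm_num) ⟨2, rfl⟩
  rw [Finset.sum_range_succ, Finset.sum_range_one, ModularForm.E₄_qExpansion_coeff_one]
  erw [this]
  ring
lemma e6_as : (fun z => e6 z - (1 - 504 * p z ^ 2)) =O[I∞] (fun z => p z ^ 4) := by
  have h := qtrunc e6 _ one_pos e6_sum 2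
  simp only [q_eq] at h
  refine h.congr (fun z => ?_) (fun z => by ring)
  have := EisensteinSeries.E_qExpansion_coeff_zero (k := 6) (by norm_num) ⟨3, rfl⟩
  rw [Finset.sum_range_succ, Finset.sum_range_one, ModularForm.E₆_qExpansion_coeff_one]
  erw [this]
  ring

lemma lim_of_as {f : ℂ → ℂ} {c d : ℂ} {n k : ℕ} (hn : n ≠ 0) (hk : k ≠ 0)
    (h : (fun z => f z - (c + d * p z ^ n)) =O[I∞] (fun z => p z ^ k)) : Tendsto f I∞ (𝓝 c) := by
  have h1 : Tendsto (fun z => p z ^ k) I∞ (𝓝 0) := by simpa [hk] using p_lim.pow k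
  have h2 : Tendsto (fun z => c + d * p z ^ n) I∞ (𝓝 c) := by
    simpa [hn] using ((p_lim.pow n).const_mul d).const_add c
  simpa using (h.trans_tendsto h1).add h2

lemma e2_lim : Tendsto e2 I∞ (𝓝 1) := lim_of_as (n := 2) (d := -24) two_ne_zero four_ne_zero
  (by simpa [sub_eq_add_neg] using e2_as)
lemma e4_lim : Tendsto e4 I∞ (𝓝 1) := lim_of_as (n := 2) two_ne_zero four_ne_zero e4_as
lemma e6_lim : Tendsto e6 I∞ (𝓝 1) := lim_of_as (n := 2) (d := -504) two_ne_zero four_ne_zero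
  (by simpa [sub_eq_add_neg] using e6_as)

noncomputable def dl (z : ℂ) : ℂ := (e4 z ^ 3 - e6 z ^ 2) / 1728
lemma dl_ne (z : ℂ) (hz : 0 < z.im) : dl z ≠ 0 := by
  have h := ModularForm.discriminant_ne_zero (UpperHalfPlane.ofComplex z)
  rwa [ModularForm.discriminant_eq_E₄_cube_sub_E₆_sq] at h

end SP8


namespace SP8
open Complex Filter Topology Asymptotics
open scoped MatrixGroups ModularForm Manifold

local notation "I∞" => Filter.comap Complex.im Filter.atTop

lemma pi0 : (Real.pi : ℂ) ≠ 0 := by exact_mod_cast Real.pi_ne_zero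

lemma dS {f g : ℂ → ℂ} {g' z : ℂ} (hz : 0 < z.im)
    (hf : ∀ z : ℂ, 0 < z.im → DifferentiableAt ℂ f z)
    (h : ∀ z : ℂ, 0 < z.im → f (-1 / z) = g z) (hg : HasDerivAt g g' z) :
    deriv f (-1 / z) = z ^ 2 * g' := by
  have z0 := ne0 hz
  have h1 : HasDerivAt (fun z : ℂ => -1 / z) (1 / z ^ 2) z := by
    have := (hasDerivAt_inv z0).const_mul (-1)
    simpa [div_eq_mul_inv] using this
  have h2 := (hf _ (im_inv_pos hz)).hasDerivAt.comp z h1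
  have h3 : HasDerivAt (f ∘ fun z : ℂ => -1 / z) g' z := by
    refine hg.congr_of_eventuallyEq ?_
    filter_upwards [Hopen.mem_nhds hz] with w hw using h w hw
  have := h2.unique h3
  rw [← this]; field_simp

lemma dT {f : ℂ → ℂ} {z : ℂ} (hz : 0 < z.im)
    (h : ∀ z : ℂ, 0 < z.im → f (z + 1) = f z) : deriv f (z + 1) = deriv f z := by
  rw [← deriv_comp_add_const]
  refine EventuallyEq.deriv_eq ?_
  filter_upwards [Hopen.mem_nhds hz] with w hw using h w hw

lemma deriv_diff {f : ℂ → ℂ} (hf : ∀ z : ℂ, 0 < z.im → DifferentiableAt ℂ f z) (z : ℂ) (hz : 0 < z.im) :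
    DifferentiableAt ℂ (deriv f) z :=
  ((DifferentiableOn.deriv (s := {z : ℂ | 0 < z.im}) (fun w hw => (hf w hw).differentiableWithinAt) Hopen).differentiableAt
    (Hopen.mem_nhds hz))

lemma ram2 (z : ℂ) (hz : 0 < z.im) :
    HasDerivAt e2 (2 * Real.pi * I * ((e2 z ^ 2 - e4 z) / 12)) z := by
  have h := vanish (fun z => deriv e2 z - (2 * Real.pi * I * ((e2 z ^ 2 - e4 z) / 12))) 4 (by norm_num)
    (fun z hz => by
      have := deriv_diff e2_diff z hz
      have := e2_diff z hz
      have := e4_diff z hz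
      fun_prop)
    (fun z hz => by simp only [dT hz e2_T, e2_T z hz, e4_T z hz])
    (fun z hz => by
      have h1 : HasDerivAt (fun z => z ^ 2 * e2 z - 6 * I / Real.pi * z)
        (2 * z * e2 z + z ^ 2 * deriv e2 z - 6 * I / Real.pi) z := by
        have := ((hasDerivAt_pow 2 z).mul (e2_diff z hz).hasDerivAt).sub ((hasDerivAt_id z).const_mul (6 * I / (Real.pi : ℂ)))
        refine this.congr_deriv ?_
        push_cast; ring
      have := pi0
      simp only [dS hz e2_diff e2_S h1, e2_S z hz, e4_S z hz]
      field_simp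
      ring_nf
      simp only [show I ^ 3 = -I by rw [pow_succ, I_sq]; ring, I_sq]
      ring)
    (by
      have := (deriv_lim e2 1 e2_diff e2_lim).sub ((((e2_lim.pow 2).sub e4_lim).div_const 12).const_mul (2 * Real.pi * I : ℂ))
      simpa using this) z hz
  rw [← sub_eq_zero.1 h]
  exact (e2_diff z hz).hasDerivAt

lemma ram4 (z : ℂ) (hz : 0 < z.im) :
    HasDerivAt e4 (2 * Real.pi * I * ((e2 z * e4 z - e6 z) / 3)) z := by
  have h := vanish (fun z => deriv e4 z - (2 * Real.pi * I * ((e2 z * e4 z - e6 z) / 3))) 6 (by norm_num)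
    (fun z hz => by
      have := deriv_diff e4_diff z hz
      have := e2_diff z hz
      have := e4_diff z hz
      have := e6_diff z hz
      fun_prop)
    (fun z hz => by simp only [dT hz e4_T, e2_T z hz, e4_T z hz, e6_T z hz])
    (fun z hz => by
      have h1 : HasDerivAt (fun z => z ^ 4 * e4 z)
        (4 * z ^ 3 * e4 z + z ^ 4 * deriv e4 z) z := by
        have := ((hasDerivAt_pow 4 z).mul (e4_diff z hz).hasDerivAt)
        refine this.congr_deriv ?_
        push_cast; ring
      have := pi0
      simp only [dS hz e4_diff e4_S h1, e2_S z hz, e4_S z hz, e6_S z hz]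
      field_simp
      ring_nf
      simp only [I_sq]
      ring)
    (by
      have := (deriv_lim e4 1 e4_diff e4_lim).sub ((((e2_lim.mul e4_lim).sub e6_lim).div_const 3).const_mul (2 * Real.pi * I : ℂ))
      simpa using this) z hz
  rw [← sub_eq_zero.1 h]
  exact (e4_diff z hz).hasDerivAt

lemma ram6 (z : ℂ) (hz : 0 < z.im) :
    HasDerivAt e6 (2 * Real.pi * I * ((e2 z * e6 z - e4 z ^ 2) / 2)) z := by
  have h := vanish (fun z => deriv e6 z - (2 * Real.pi * I * ((e2 z * e6 z - e4 z ^ 2) / 2))) 8 (by norm_num)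
    (fun z hz => by
      have := deriv_diff e6_diff z hz
      have := e2_diff z hz
      have := e4_diff z hz
      have := e6_diff z hz
      fun_prop)
    (fun z hz => by simp only [dT hz e6_T, e2_T z hz, e4_T z hz, e6_T z hz])
    (fun z hz => by
      have h1 : HasDerivAt (fun z => z ^ 6 * e6 z)
        (6 * z ^ 5 * e6 z + z ^ 6 * deriv e6 z) z := by
        have := ((hasDerivAt_pow 6 z).mul (e6_diff z hz).hasDerivAt)
        refine this.congr_deriv ?_
        push_cast; ring
      have := pi0
      simp only [dS hz e6_diff e6_S h1, e2_S z hz, e4_S z hz, e6_S z hz]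
      field_simp
      ring_nf
      simp only [I_sq]
      ring)
    (by
      have := (deriv_lim e6 1 e6_diff e6_lim).sub ((((e2_lim.mul e6_lim).sub (e4_lim.pow 2)).div_const 2).const_mul (2 * Real.pi * I : ℂ))
      simpa using this) z hz
  rw [← sub_eq_zero.1 h]
  exact (e6_diff z hz).hasDerivAt

noncomputable def x1 (z : ℂ) : ℂ := 2 * e2 (2 * z) - e2 z
noncomputable def x2 (z : ℂ) : ℂ := e2 (z / 2) / 2 - e2 z
noncomputable def x3 (z : ℂ) : ℂ := e2 ((z + 1) / 2) / 2 - e2 z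

lemma im_two {z : ℂ} (hz : 0 < z.im) : 0 < (2 * z).im := by simpa using hz
lemma im_half {z : ℂ} (hz : 0 < z.im) : 0 < (z / 2).im := by
  rw [show z / 2 = z / (2 : ℝ) by simp, div_ofReal_im]; linarith
lemma im_half1 {z : ℂ} (hz : 0 < z.im) : 0 < ((z + 1) / 2).im := im_half (by simpa using hz)

lemma x1_diff (z : ℂ) (hz : 0 < z.im) : DifferentiableAt ℂ x1 z := by
  have h1 := e2_diff z hz
  have h2 := (e2_diff _ (im_two hz)).comp z (f := fun z => 2 * z) (by fun_prop)
  exact (h2.const_mul 2).sub h1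
lemma x2_diff (z : ℂ) (hz : 0 < z.im) : DifferentiableAt ℂ x2 z := by
  have h1 := e2_diff z hz
  have h2 := (e2_diff _ (im_half hz)).comp z (f := fun z => z / 2) (by fun_prop)
  exact (h2.div_const 2).sub h1
lemma x3_diff (z : ℂ) (hz : 0 < z.im) : DifferentiableAt ℂ x3 z := by
  have h1 := e2_diff z hz
  have h2 := (e2_diff _ (im_half1 hz)).comp z (f := fun z => (z + 1) / 2) (by fun_prop)
  exact (h2.div_const 2).sub h1

lemma x1_T (z : ℂ) (hz : 0 < z.im) : x1 (z + 1) = x1 z := by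
  have h := e2_T _ (im_two hz)
  have h' := e2_T (2 * z + 1) (by simpa using hz)
  rw [x1, x1, e2_T z hz, ← h, ← h']
  ring_nf
lemma x2_T (z : ℂ) (hz : 0 < z.im) : x2 (z + 1) = x3 z := by
  rw [x2, x3, e2_T z hz]
lemma x3_T (z : ℂ) (hz : 0 < z.im) : x3 (z + 1) = x2 z := by
  have h := e2_T _ (im_half hz)
  rw [x2, x3, e2_T z hz, ← h]
  ring_nf

lemma x1_S (z : ℂ) (hz : 0 < z.im) : x1 (-1 / z) = z ^ 2 * x2 z := by
  have h := e2_S _ (im_half hz)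
  rw [x1, x2, e2_S z hz, show 2 * (-1 / z) = -1 / (z / 2) by have := ne0 hz; field_simp, h]
  ring
lemma x2_S (z : ℂ) (hz : 0 < z.im) : x2 (-1 / z) = z ^ 2 * x1 z := by
  have h := e2_S _ (im_two hz)
  rw [x1, x2, e2_S z hz, show (-1 / z) / 2 = -1 / (2 * z) by have := ne0 hz; field_simp, h]
  ring
lemma x3_S (z : ℂ) (hz : 0 < z.im) : x3 (-1 / z) = z ^ 2 * x3 z := by
  have z0 := ne0 hz
  have hu : 0 < ((z - 1) / 2).im := im_half (by simpa using hz)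
  have hv : 0 < ((-1 / z + 1) / 2).im := im_half1 (im_inv_pos hz)
  have u0 := ne0 hu
  have z1 : z - 1 ≠ 0 := fun h => u0 (by simp [h])
  have h1 := e2_S _ hu
  have h2 := e2_S _ hv
  have hw : 0 < (-1 / ((-1 / z + 1) / 2)).im := im_inv_pos hv
  have v0 : -1 / z + 1 ≠ 0 := fun h => (ne0 hv) (by simp [h])
  have h3 := e2_T _ hw
  have h4 := e2_T (-1 / ((-1 / z + 1) / 2) + 1) (by simpa using hw)
  have h5 : (-1 / ((-1 / z + 1) / 2) + 1 + 1) = -1 / ((z - 1) / 2) := by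
    have : -1 + z ≠ 0 := by rwa [neg_add_eq_sub]
    field_simp
    ring
  rw [h4.symm.trans (congrArg e2 h5)] at h3
  rw [← h3, h1] at h2
  have h6 := e2_T _ hu
  rw [show (z - 1) / 2 + 1 = (z + 1) / 2 by ring] at h6
  rw [x3, x3, e2_S z hz, h6]
  set A := e2 ((-1 / z + 1) / 2)
  set B := e2 ((z - 1) / 2)
  rw [show (-1 / z + 1) / 2 = (z - 1) / (2 * z) by field_simp; ring] at h2
  have hp := pi0
  have h7 : (z - 1) * (Real.pi * A) = (z - 1) * (z ^ 2 * B * Real.pi - 12 * I * z) := by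
    field_simp at h2
    linear_combination (-1 : ℂ) * h2
  have := mul_left_cancel₀ z1 h7
  field_simp
  linear_combination this

lemma tt_two : Tendsto (fun z : ℂ => 2 * z) I∞ I∞ := by
  rw [tendsto_comap_iff]
  have : (im ∘ fun z : ℂ => 2 * z) = fun z => 2 * z.im := by ext z; simp
  rw [this]
  exact tendsto_comap.const_mul_atTop two_pos
lemma tt_half : Tendsto (fun z : ℂ => z / 2) I∞ I∞ := by
  rw [tendsto_comap_iff]
  have : (im ∘ fun z : ℂ => z / 2) = fun z => z.im / 2 := by
    ext z; simp [show z / 2 = z / (2 : ℝ) by simp, div_ofReal_im]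
  rw [this]
  exact tendsto_comap.atTop_div_const two_pos
lemma tt_half1 : Tendsto (fun z : ℂ => (z + 1) / 2) I∞ I∞ := by
  refine tt_half.comp (f := fun z => z + 1) ?_
  rw [tendsto_comap_iff]
  have : (im ∘ fun z : ℂ => z + 1) = im := by ext z; simp
  rw [this]
  exact tendsto_comap

lemma x1_lim : Tendsto x1 I∞ (𝓝 1) := by
  have := ((e2_lim.comp tt_two).const_mul 2).sub e2_lim
  norm_num at this; exact this
lemma x2_lim : Tendsto x2 I∞ (𝓝 (-(1 / 2))) := by
  have := ((e2_lim.comp tt_half).div_const 2).sub e2_lim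
  norm_num at this; exact this
lemma x3_lim : Tendsto x3 I∞ (𝓝 (-(1 / 2))) := by
  have := ((e2_lim.comp tt_half1).div_const 2).sub e2_lim
  norm_num at this; exact this

lemma xsum (z : ℂ) (hz : 0 < z.im) : x1 z + x2 z + x3 z = 0 := by
  refine vanish (fun z => x1 z + x2 z + x3 z) 2 (by norm_num) (fun z hz => ?_) (fun z hz => ?_) (fun z hz => ?_) ?_ z hz
  · exact ((x1_diff z hz).add (x2_diff z hz)).add (x3_diff z hz)
  · simp only [x1_T z hz, x2_T z hz, x3_T z hz]; ring
  · simp only [x1_S z hz, x2_S z hz, x3_S z hz]; ring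
  · have := (x1_lim.add x2_lim).add x3_lim
    norm_num at this; exact this
lemma xsum2 (z : ℂ) (hz : 0 < z.im) : x1 z * x2 z + x2 z * x3 z + x3 z * x1 z + 3 / 4 * e4 z = 0 := by
  refine vanish (fun z => x1 z * x2 z + x2 z * x3 z + x3 z * x1 z + 3 / 4 * e4 z) 4 (by norm_num) (fun z hz => ?_) (fun z hz => ?_) (fun z hz => ?_) ?_ z hz
  · have := x1_diff z hz
    have := x2_diff z hz
    have := x3_diff z hz
    have := e4_diff z hz
    fun_prop
  · simp only [x1_T z hz, x2_T z hz, x3_T z hz, e4_T z hz]; ring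
  · simp only [x1_S z hz, x2_S z hz, x3_S z hz, e4_S z hz]; ring
  · have := (((x1_lim.mul x2_lim).add (x2_lim.mul x3_lim)).add (x3_lim.mul x1_lim)).add (e4_lim.const_mul (3 / 4))
    norm_num at this; exact this
lemma xprod (z : ℂ) (hz : 0 < z.im) : x1 z * x2 z * x3 z - e6 z / 4 = 0 := by
  refine vanish (fun z => x1 z * x2 z * x3 z - e6 z / 4) 6 (by norm_num) (fun z hz => ?_) (fun z hz => ?_) (fun z hz => ?_) ?_ z hz
  · have := x1_diff z hz
    have := x2_diff z hz
    have := x3_diff z hz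
    have := e6_diff z hz
    fun_prop
  · simp only [x1_T z hz, x2_T z hz, x3_T z hz, e6_T z hz]; ring
  · simp only [x1_S z hz, x2_S z hz, x3_S z hz, e6_S z hz]; ring
  · have := ((x1_lim.mul x2_lim).mul x3_lim).sub (e6_lim.div_const 4)
    norm_num at this; exact this

lemma xder {x : ℂ → ℂ} (hd : ∀ z : ℂ, 0 < z.im → DifferentiableAt ℂ x z)
    (hc : ∀ z : ℂ, 0 < z.im → 4 * x z ^ 3 - 3 * e4 z * x z - e6 z = 0) (z : ℂ) (hz : 0 < z.im) :
    HasDerivAt x (2 * Real.pi * I * (e2 z * x z / 6 - x z ^ 2 / 3 + e4 z / 6)) z := by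
  have hx := (hd z hz).hasDerivAt
  have h1 := (((hx.pow 3).const_mul 4).sub (((ram4 z hz).const_mul 3).mul hx)).sub (ram6 z hz)
  have h0 : HasDerivAt (fun z => 4 * x z ^ 3 - 3 * e4 z * x z - e6 z) 0 z := by
    refine (hasDerivAt_const z (0 : ℂ)).congr_of_eventuallyEq ?_
    filter_upwards [Hopen.mem_nhds hz] with w hw using hc w hw
  have h2 := h1.unique h0
  have hcz := hc z hz
  have hn : 12 * x z ^ 2 - 3 * e4 z ≠ 0 := by
    intro h
    apply dl_ne z hz
    have h4 : e4 z = 4 * x z ^ 2 := by linear_combination (-1 / 3 : ℂ) * h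
    have h6 : e6 z = -8 * x z ^ 3 := by
      rw [h4] at hcz; linear_combination (-1 : ℂ) * hcz
    rw [dl, h4, h6]; ring
  have : deriv x z = 2 * Real.pi * I * (e2 z * x z / 6 - x z ^ 2 / 3 + e4 z / 6) := by
    refine mul_left_cancel₀ hn ?_
    push_cast at h2
    linear_combination h2 - 2 * Real.pi * I * (e2 z / 2 - x z) * hcz
  rwa [this] at hx

noncomputable def a (z : ℂ) : ℂ := 2 / 3 * (x3 z - x2 z)
noncomputable def b (z : ℂ) : ℂ := 2 / 3 * (x1 z - x3 z)

lemma x1_ab (z : ℂ) (hz : 0 < z.im) : x1 z = (a z + 2 * b z) / 2 := by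
  rw [a, b]; linear_combination (1 / 3 : ℂ) * xsum z hz
lemma x2_ab (z : ℂ) (hz : 0 < z.im) : x2 z = -(2 * a z + b z) / 2 := by
  rw [a, b]; linear_combination (1 / 3 : ℂ) * xsum z hz
lemma x3_ab (z : ℂ) (hz : 0 < z.im) : x3 z = (a z - b z) / 2 := by
  rw [a, b]; linear_combination (1 / 3 : ℂ) * xsum z hz
lemma e4_ab (z : ℂ) (hz : 0 < z.im) : e4 z = a z ^ 2 + a z * b z + b z ^ 2 := by
  have h := xsum2 z hz
  rw [x1_ab z hz, x2_ab z hz, x3_ab z hz] at h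
  linear_combination (4 / 3 : ℂ) * h
lemma e6_ab (z : ℂ) (hz : 0 < z.im) : e6 z = (a z + 2 * b z) * (2 * a z + b z) * (b z - a z) / 2 := by
  have h := xprod z hz
  rw [x1_ab z hz, x2_ab z hz, x3_ab z hz] at h
  linear_combination (-4 : ℂ) * h
lemma dl_ab (z : ℂ) (hz : 0 < z.im) : dl z = (a z * b z * (a z + b z)) ^ 2 / 256 := by
  rw [dl, e4_ab z hz, e6_ab z hz]; ring

lemma a_der (z : ℂ) (hz : 0 < z.im) :
    HasDerivAt a (2 * Real.pi * I * ((e2 z * a z + a z ^ 2 + 2 * a z * b z) / 6)) z := by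
  have h2 := xder x2_diff (fun z hz => by rw [x2_ab z hz, e4_ab z hz, e6_ab z hz]; ring) z hz
  have h3 := xder x3_diff (fun z hz => by rw [x3_ab z hz, e4_ab z hz, e6_ab z hz]; ring) z hz
  refine ((h3.sub h2).const_mul (2 / 3)).congr_deriv ?_
  rw [x2_ab z hz, x3_ab z hz]; ring
lemma b_der (z : ℂ) (hz : 0 < z.im) :
    HasDerivAt b (2 * Real.pi * I * ((e2 z * b z - 2 * a z * b z - b z ^ 2) / 6)) z := by
  have h2 := xder x1_diff (fun z hz => by rw [x1_ab z hz, e4_ab z hz, e6_ab z hz]; ring) z hz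
  have h3 := xder x3_diff (fun z hz => by rw [x3_ab z hz, e4_ab z hz, e6_ab z hz]; ring) z hz
  refine ((h2.sub h3).const_mul (2 / 3)).congr_deriv ?_
  rw [x1_ab z hz, x3_ab z hz]; ring

lemma a_T (z : ℂ) (hz : 0 < z.im) : a (z + 1) = - a z := by
  rw [a, a, x2_T z hz, x3_T z hz]; ring
lemma b_T (z : ℂ) (hz : 0 < z.im) : b (z + 1) = a z + b z := by
  rw [a, b, b, x1_T z hz, x3_T z hz]; ring
lemma a_S (z : ℂ) (hz : 0 < z.im) : a (-1 / z) = - z ^ 2 * b z := by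
  rw [a, b, x2_S z hz, x3_S z hz]; ring
lemma b_S (z : ℂ) (hz : 0 < z.im) : b (-1 / z) = - z ^ 2 * a z := by
  rw [a, b, x1_S z hz, x3_S z hz]; ring

lemma e2_as' : (fun z => e2 (z / 2) - (1 - 24 * p z)) =O[I∞] (fun z => p z ^ 2) := by
  have h (z : ℂ) : p (z / 2) ^ 2 = p z := by
    rw [p, p, ← exp_nat_mul]; congr 1; push_cast; ring
  refine (e2_as.comp_tendsto tt_half).congr (fun z => ?_) (fun z => ?_)
  · simp [Function.comp, h]
  · simp only [Function.comp, ← h z]; ring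
lemma e2_as'' : (fun z => e2 ((z + 1) / 2) - (1 + 24 * p z)) =O[I∞] (fun z => p z ^ 2) := by
  have h (z : ℂ) : p ((z + 1) / 2) ^ 2 = - p z := by
    rw [← p_add_one, p, p, ← exp_nat_mul]; congr 1; push_cast; ring
  refine (e2_as.comp_tendsto tt_half1).congr (fun z => ?_) (fun z => ?_)
  · simp [Function.comp, h]
  · simp only [Function.comp, show p ((z + 1) / 2) ^ 4 = (p ((z + 1) / 2) ^ 2) ^ 2 by ring, h]; ring

lemma p_small {m n : ℕ} (h : m ≤ n) : (fun z => p z ^ n) =O[I∞] (fun z => p z ^ m) := by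
  have : (fun z => p z ^ (n - m)) =O[I∞] (fun _ => (1 : ℂ)) := by
    refine Tendsto.isBigO_one ℂ (p_lim.pow (n - m))
  refine (this.mul (isBigO_refl (fun z => p z ^ m) _)).congr (fun z => ?_) (fun z => one_mul _)
  rw [← pow_add]; congr 1; omega

lemma a_as : (fun z => a z - 16 * p z) =O[I∞] (fun z => p z ^ 2) := by
  refine ((e2_as''.sub e2_as').const_mul_left (1 / 3)).congr_left (fun z => ?_)
  simp only [a, x2, x3]; ring
lemma b_as : (fun z => b z - (1 - 8 * p z)) =O[I∞] (fun z => p z ^ 2) := by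
  have h1 : (fun z => e2 (2 * z) - 1) =O[I∞] (fun z => p z ^ 2) := by
    have h (z : ℂ) : p (2 * z) = p z ^ 2 := by
      rw [p, p, ← exp_nat_mul]; congr 1; push_cast; ring
    have h2 : (fun z => e2 (2 * z) - (1 - 24 * p z ^ 4)) =O[I∞] (fun z => p z ^ 8) := by
      refine (e2_as.comp_tendsto tt_two).congr (fun z => ?_) (fun z => ?_)
      · simp [Function.comp, h]; ring
      · simp only [Function.comp, h]; ring
    have h3 := (h2.trans (p_small (by norm_num : 2 ≤ 8))).add ((p_small (by norm_num : 2 ≤ 4)).const_mul_left (-24))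
    refine h3.congr_left (fun z => by ring)
  refine ((h1.const_mul_left (4 / 3)).sub (e2_as''.const_mul_left (1 / 3))).congr_left (fun z => ?_)
  simp only [b, x1, x3]; ring

lemma a_diff (z : ℂ) (hz : 0 < z.im) : DifferentiableAt ℂ a z := (a_der z hz).differentiableAt
lemma b_diff (z : ℂ) (hz : 0 < z.im) : DifferentiableAt ℂ b z := (b_der z hz).differentiableAt

end SP8


namespace SP8
open Complex Filter Topology Asymptotics
open scoped MatrixGroups ModularForm Manifold

local notation "I∞" => Filter.comap Complex.im Filter.atTop

noncomputable def E (t : ℝ) : ℝ := (e2 (t * I)).re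
noncomputable def A (t : ℝ) : ℝ := (a (t * I)).re
noncomputable def B (t : ℝ) : ℝ := (b (t * I)).re

lemma imI {t : ℝ} (ht : 0 < t) : 0 < ((t : ℂ) * I).im := by simpa using ht

lemma p_I (t : ℝ) : p (t * I) = (Real.exp (-Real.pi * t) : ℝ) := by
  rw [p]; push_cast; congr 1; linear_combination (Real.pi * t : ℂ) * I_sq

lemma E_sum {t : ℝ} (ht : 0 < t) :
    HasSum (fun m => (if m = 0 then 1 else -24 * (sg m : ℝ)) * Real.exp (-Real.pi * t) ^ (2 * m)) (E t) := by
  have h := e2_sum (t * I) (imI ht)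
  have h' := Complex.hasSum_re h
  refine h'.congr_fun ?_
  intro m
  rw [q_eq, p_I, ← pow_mul]
  split_ifs
  · norm_cast
  · norm_cast

lemma E_c {t : ℝ} (ht : 0 < t) : e2 (t * I) = E t := by
  have h := (Complex.hasSum_ofReal).2 (E_sum ht)
  refine (e2_sum (t * I) (imI ht)).unique (h.congr_fun ?_)
  intro m
  rw [q_eq, p_I, ← pow_mul]
  split_ifs <;> push_cast <;> rfl

lemma A_sum {t : ℝ} (ht : 0 < t) :
    HasSum (fun m => (if m = 0 then 0 else 8 * (sg m : ℂ) * (1 - (-1) ^ m)) * (Real.exp (-Real.pi * t) : ℂ) ^ m) (a (t * I)) := by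
  have h1 := e2_sum _ (im_half1 (imI ht))
  have h2 := e2_sum _ (im_half (imI ht))
  have h := (h1.sub h2).mul_left (1 / 3)
  have e : a (t * I) = 1 / 3 * (e2 ((t * I + 1) / 2) - e2 (t * I / 2)) := by
    simp only [a, x2, x3]; ring
  rw [e]
  refine h.congr_fun ?_
  intro m
  have p1 (z : ℂ) : p (z / 2) ^ 2 = p z := by
    rw [p, p, ← exp_nat_mul]; congr 1; push_cast; ring
  simp only [q_eq, p1, p_add_one, p_I]
  split_ifs with hm
  · simp [hm]
  · rw [neg_pow]; ring

lemma A_sum' {t : ℝ} (ht : 0 < t) :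
    HasSum (fun m => (if m = 0 then 0 else 8 * (sg m : ℝ) * (1 - (-1) ^ m)) * (Real.exp (-Real.pi * t)) ^ m) (A t) := by
  refine (Complex.hasSum_re (A_sum ht)).congr_fun ?_
  intro m
  split_ifs
  · simp
  · norm_cast

lemma A_c {t : ℝ} (ht : 0 < t) : a (t * I) = A t := by
  have h := (Complex.hasSum_ofReal).2 (A_sum' ht)
  refine (A_sum ht).unique (h.congr_fun ?_)
  intro m
  split_ifs <;> push_cast <;> rfl

lemma A_pos {t : ℝ} (ht : 0 < t) : 0 < A t := by
  have h := A_sum' ht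
  rw [← h.tsum_eq]
  refine h.summable.tsum_pos (fun m => ?_) 1 ?_
  · refine mul_nonneg ?_ (by positivity)
    split_ifs
    · exact le_rfl
    · refine mul_nonneg (by positivity) ?_
      rcases neg_one_pow_eq_or ℝ m with h | h <;> rw [h] <;> norm_num
  · simp [sg]
    positivity

lemma inv_I {t : ℝ} (ht : 0 < t) : -1 / ((t : ℂ) * I) = ((1 / t : ℝ) : ℂ) * I := by
  have : (t : ℂ) ≠ 0 := by exact_mod_cast ht.ne'
  push_cast
  field_simp
  rw [I_sq]

lemma AB_S {t : ℝ} (ht : 0 < t) : (A (1 / t) : ℂ) = t ^ 2 * b (t * I) := by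
  rw [← A_c (by positivity), ← inv_I ht, a_S _ (imI ht), mul_pow, I_sq]; ring

lemma B_c {t : ℝ} (ht : 0 < t) : b (t * I) = B t := by
  have h := AB_S ht
  have h0 : (t : ℂ) ≠ 0 := by exact_mod_cast ht.ne'
  have h1 : b (t * I) = ((A (1 / t) / t ^ 2 : ℝ) : ℂ) := by
    push_cast; rw [h]; field_simp
  rw [B, h1, ofReal_re]

lemma A_inv {t : ℝ} (ht : 0 < t) : A (1 / t) = t ^ 2 * B t := by
  have h := AB_S ht
  rw [B_c ht] at h
  exact_mod_cast h
lemma B_pos {t : ℝ} (ht : 0 < t) : 0 < B t := by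
  have h := A_pos (t := 1 / t) (by positivity)
  rw [A_inv ht] at h
  exact pos_of_mul_pos_right h (by positivity)
lemma B_inv {t : ℝ} (ht : 0 < t) : B (1 / t) = t ^ 2 * A t := by
  have h := A_inv (t := 1 / t) (by positivity)
  rw [one_div_one_div] at h
  rw [h]; field_simp
lemma E_inv {t : ℝ} (ht : 0 < t) : E (1 / t) = - t ^ 2 * E t + 6 / Real.pi * t := by
  have h := e2_S _ (imI ht)
  rw [inv_I ht, E_c (by positivity), E_c ht, mul_pow, I_sq] at h
  have : ((E (1 / t) : ℝ) : ℂ) = ((- t ^ 2 * E t + 6 / Real.pi * t : ℝ) : ℂ) := by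
    rw [h]; push_cast; linear_combination (-6 / Real.pi * t : ℂ) * I_sq
  exact_mod_cast this

lemma real_der {f : ℂ → ℂ} {g : ℝ → ℝ} {c t : ℝ} (ht : 0 < t) (hg : ∀ {t : ℝ}, 0 < t → f (t * I) = g t)
    (hf : HasDerivAt f (2 * Real.pi * I * c) (t * I)) : HasDerivAt g (-2 * Real.pi * c) t := by
  have h1 : HasDerivAt (fun s : ℝ => (s : ℂ) * I) I t := by
    simpa using (Complex.ofRealCLM.hasDerivAt (x := t)).mul_const I
  have h2 := HasDerivAt.comp t hf h1
  have h3 := (Complex.reCLM.hasFDerivAt.comp_hasDerivAt t h2)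
  have h4 : reCLM (2 * Real.pi * I * c * I) = -2 * Real.pi * c := by
    rw [show (2 * Real.pi * I * c * I : ℂ) = ((-2 * Real.pi * c : ℝ) : ℂ) by push_cast; linear_combination (2 * Real.pi * c : ℂ) * I_sq]
    simp
  rw [h4] at h3
  refine h3.congr_of_eventuallyEq ?_
  filter_upwards [lt_mem_nhds ht] with s hs
  simp [Function.comp, hg hs]

lemma A_der {t : ℝ} (ht : 0 < t) : HasDerivAt A (-2 * Real.pi * ((E t * A t + A t ^ 2 + 2 * A t * B t) / 6)) t := by
  refine real_der ht A_c ((a_der _ (imI ht)).congr_deriv ?_)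
  rw [E_c ht, A_c ht, B_c ht]; push_cast; ring
lemma B_der {t : ℝ} (ht : 0 < t) : HasDerivAt B (-2 * Real.pi * ((E t * B t - 2 * A t * B t - B t ^ 2) / 6)) t := by
  refine real_der ht B_c ((b_der _ (imI ht)).congr_deriv ?_)
  rw [E_c ht, A_c ht, B_c ht]; push_cast; ring
lemma E_der {t : ℝ} (ht : 0 < t) : HasDerivAt E (-2 * Real.pi * ((E t ^ 2 - (A t ^ 2 + A t * B t + B t ^ 2)) / 12)) t := by
  refine real_der ht E_c ((ram2 _ (imI ht)).congr_deriv ?_)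
  rw [e4_ab _ (imI ht), E_c ht, A_c ht, B_c ht]; push_cast; ring

lemma E_mono {s t : ℝ} (hs : 0 < s) (hst : s ≤ t) : E s ≤ E t := by
  refine hasSum_le (fun m => ?_) (E_sum hs) (E_sum (hs.trans_le hst))
  split_ifs with h
  · simp [h]
  · refine mul_le_mul_of_nonpos_left ?_ (by simp)
    refine pow_le_pow_left₀ (Real.exp_pos _).le (Real.exp_le_exp.2 ?_) _
    nlinarith [Real.pi_pos]

lemma E_sq {t : ℝ} (ht : 0 < t) : E t ^ 2 ≤ A t ^ 2 + A t * B t + B t ^ 2 := by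
  have hm : MonotoneOn E (Set.Ioi 0) := fun x hx y _ hxy => E_mono hx hxy
  have h := hm.derivWithin_nonneg (x := t)
  rw [derivWithin_of_isOpen isOpen_Ioi ht, (E_der ht).deriv] at h
  have := Real.pi_pos
  by_contra! hc
  have : 0 < 2 * Real.pi * ((E t ^ 2 - (A t ^ 2 + A t * B t + B t ^ 2)) / 12) := by
    apply mul_pos (by positivity); linarith
  linarith

noncomputable def U (t : ℝ) : ℝ := E t * (A t ^ 2 + A t * B t + B t ^ 2) - (A t + 2 * B t) * (2 * A t + B t) * (B t - A t) / 2
noncomputable def DU (t : ℝ) : ℝ := (E t ^ 2 - (A t ^ 2 + A t * B t + B t ^ 2)) / 12 * (A t ^ 2 + A t * B t + B t ^ 2)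
  + E t * U t / 3 - (E t * ((A t + 2 * B t) * (2 * A t + B t) * (B t - A t) / 2) - (A t ^ 2 + A t * B t + B t ^ 2) ^ 2) / 2
noncomputable def g (t : ℝ) : ℝ := 2 * A t ^ 2 + 5 * A t * B t + 5 * B t ^ 2
noncomputable def g2 (t : ℝ) : ℝ := 5 / 6 * E t * g t + 5 / 3 * (A t ^ 3 + 3 * A t ^ 2 * B t + 3 * A t * B t ^ 2 + 2 * B t ^ 3)
noncomputable def G (t : ℝ) : ℝ := A t ^ 3 * g t
noncomputable def dR (t : ℝ) : ℝ := (A t * B t * (A t + B t)) ^ 2 / 256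
noncomputable def L (t : ℝ) : ℝ := 2 * U t * DU t * G t - U t ^ 2 * (A t ^ 3 * g2 t)

lemma dR_pos {t : ℝ} (ht : 0 < t) : 0 < dR t := by
  have := A_pos ht
  have := B_pos ht
  rw [dR]; positivity
lemma G_pos {t : ℝ} (ht : 0 < t) : 0 < G t := by
  have := A_pos ht
  have := B_pos ht
  rw [G, g]; positivity

lemma U_der {t : ℝ} (ht : 0 < t) : HasDerivAt U (-2 * Real.pi * DU t) t := by
  have hA := A_der ht
  have hB := B_der ht
  have hE := E_der ht
  have := (hE.mul (((hA.pow 2).add (hA.mul hB)).add (hB.pow 2))).sub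
    (((((hA.add (hB.const_mul 2)).mul ((hA.const_mul 2).add hB)).mul (hB.sub hA))).div_const 2)
  refine this.congr_deriv ?_
  simp only [DU, U, Pi.add_apply, Pi.mul_apply, Pi.sub_apply, Pi.pow_apply]
  push_cast
  ring

lemma G_der {t : ℝ} (ht : 0 < t) : HasDerivAt G (-2 * Real.pi * (A t ^ 3 * g2 t)) t := by
  have hA := A_der ht
  have hB := B_der ht
  have := (hA.pow 3).mul ((((hA.pow 2).const_mul 2).add ((hA.const_mul 5).mul hB)).add ((hB.pow 2).const_mul 5))
  refine this.congr_deriv ?_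
  simp only [g2, g, Pi.add_apply, Pi.mul_apply, Pi.pow_apply]
  push_cast
  ring

lemma dR_der {t : ℝ} (ht : 0 < t) : HasDerivAt dR (-2 * Real.pi * (E t * dR t)) t := by
  have hA := A_der ht
  have hB := B_der ht
  have := (((hA.mul hB).mul (hA.add hB)).pow 2).div_const 256
  refine this.congr_deriv ?_
  simp only [dR, Pi.add_apply, Pi.mul_apply]
  push_cast
  ring

lemma L_der {t : ℝ} (ht : 0 < t) : HasDerivAt L (-2 * Real.pi * (11 / 6 * E t * L t +
    dR t * (600 * (A t ^ 2 + A t * B t + B t ^ 2 - E t ^ 2) * G t + 640 * A t * U t ^ 2))) t := by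
  have hA := A_der ht
  have hB := B_der ht
  have hE := E_der ht
  have hU := U_der ht
  have hG := G_der ht
  have h4 := ((hA.pow 2).add (hA.mul hB)).add (hB.pow 2)
  have h6 := (((((hA.add (hB.const_mul 2)).mul ((hA.const_mul 2).add hB)).mul (hB.sub hA))).div_const 2)
  have hDU := (((((hE.pow 2).sub h4).div_const 12).mul h4).add ((hE.mul hU).div_const 3)).sub
    (((hE.mul h6).sub (h4.pow 2)).div_const 2)
  have hg := (((hA.pow 2).const_mul 2).add ((hA.const_mul 5).mul hB)).add ((hB.pow 2).const_mul 5)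
  have hg2 := ((hE.const_mul (5 / 6)).mul hg).add (((((hA.pow 3).add (((hA.pow 2).const_mul 3).mul hB)).add
    ((hA.const_mul 3).mul (hB.pow 2))).add ((hB.pow 3).const_mul 2)).const_mul (5 / 3))
  have := (((hU.const_mul 2).mul hDU).mul hG).sub ((hU.pow 2).mul ((hA.pow 3).mul hg2))
  refine this.congr_deriv ?_
  simp only [L, DU, g2, g, G, U, dR, Pi.add_apply, Pi.mul_apply, Pi.sub_apply, Pi.pow_apply]
  push_cast
  ring

lemma ttI : Tendsto (fun t : ℝ => (t : ℂ) * I) atTop I∞ := by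
  rw [tendsto_comap_iff]
  refine tendsto_id.congr (fun t => by simp)

lemma re_lim {f : ℂ → ℂ} {c : ℝ} (h : Tendsto f I∞ (𝓝 c)) :
    Tendsto (fun t : ℝ => (f (t * I)).re) atTop (𝓝 c) := by
  have := (continuous_re.tendsto _).comp (h.comp ttI)
  rw [ofReal_re] at this
  exact this

lemma a_lim : Tendsto a I∞ (𝓝 0) := lim_of_as (n := 1) (k := 2) (d := 16) one_ne_zero two_ne_zero
  (by simpa using a_as)
lemma b_lim : Tendsto b I∞ (𝓝 1) := lim_of_as (n := 1) (k := 2) (d := -8) one_ne_zero two_ne_zero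
  (by simpa [sub_eq_add_neg] using b_as)

lemma E_lim : Tendsto E atTop (𝓝 1) := re_lim (by simpa using e2_lim)
lemma A_lim : Tendsto A atTop (𝓝 0) := re_lim (by simpa using a_lim)
lemma B_lim : Tendsto B atTop (𝓝 1) := re_lim (by simpa using b_lim)

/-- `E2 E4 - E6` -/
noncomputable def u (z : ℂ) : ℂ := e2 z * e4 z - e6 z

lemma u_as : (fun z => u z - 720 * p z ^ 2) =O[I∞] (fun z => p z ^ 4) := by
  have h4 : e4 =O[I∞] (fun _ => (1 : ℂ)) := e4_lim.isBigO_one ℂ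
  have h1 := e2_as.mul h4
  have h2 : (fun z => p z ^ 4 * (-5760)) =O[I∞] (fun z => p z ^ 4) := by
    simpa only [mul_comm] using (isBigO_refl (fun z => p z ^ 4) I∞).const_mul_left (-5760)
  have h3 : (fun z => (1 - 24 * p z ^ 2) * (e4 z - (1 + 240 * p z ^ 2))) =O[I∞] (fun z => 1 * p z ^ 4) := by
    refine IsBigO.mul ?_ e4_as
    have : Tendsto (fun z => 1 - 24 * p z ^ 2) I∞ (𝓝 (1 - 24 * 0 ^ 2)) := ((p_lim.pow 2).const_mul 24).const_sub 1
    exact this.isBigO_one ℂ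
  simp only [mul_one, one_mul] at h1 h3
  refine (((h1.add h3).add h2).sub e6_as).congr_left (fun z => ?_)
  simp only [u]; ring

lemma u_S (z : ℂ) (hz : 0 < z.im) : u (-1 / z) = z ^ 6 * u z - 6 * I / Real.pi * z ^ 5 * e4 z := by
  rw [u, u, e2_S z hz, e4_S z hz, e6_S z hz]; ring

lemma up_lim : Tendsto (fun z => u z / p z) I∞ (𝓝 0) := by
  have h : u =O[I∞] (fun z => p z ^ 2) := by
    refine ((u_as.trans (p_small (by norm_num))).add ((isBigO_refl (fun z => p z ^ 2) I∞).const_mul_left 720)).congr_left (fun z => ?_)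
    ring
  have h2 : (fun z => u z / p z) =O[I∞] p := by
    refine (h.mul (isBigO_refl (fun z => (p z)⁻¹) I∞)).congr (fun z => rfl) (fun z => ?_)
    have := p_ne z
    field_simp
  exact h2.trans_tendsto p_lim
lemma ap_lim : Tendsto (fun z => a z / p z) I∞ (𝓝 16) := by
  have h2 : (fun z => a z / p z - 16) =O[I∞] p := by
    refine (a_as.mul (isBigO_refl (fun z => (p z)⁻¹) I∞)).congr (fun z => ?_) (fun z => ?_)
    · have := p_ne z
      field_simp
    · have := p_ne z
      field_simp
  simpa using (h2.trans_tendsto p_lim).add_const 16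

lemma U_c {t : ℝ} (ht : 0 < t) : u (t * I) = U t := by
  rw [u, e4_ab _ (imI ht), e6_ab _ (imI ht), E_c ht, A_c ht, B_c ht, U]; push_cast; ring

lemma UP_lim : Tendsto (fun t => U t / Real.exp (-Real.pi * t)) atTop (𝓝 0) := by
  refine (re_lim (f := fun z => u z / p z) (c := 0) (by simpa using up_lim)).congr' ?_
  filter_upwards [eventually_gt_atTop 0] with t ht
  rw [U_c ht, p_I]; norm_cast
lemma AP_lim : Tendsto (fun t => A t / Real.exp (-Real.pi * t)) atTop (𝓝 16) := by
  refine (re_lim (f := fun z => a z / p z) (c := 16) (by simpa using ap_lim)).congr' ?_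
  filter_upwards [eventually_gt_atTop 0] with t ht
  rw [A_c ht, p_I]; norm_cast
lemma UA_lim : Tendsto (fun t => U t / A t) atTop (𝓝 0) := by
  have := UP_lim.div AP_lim (by norm_num)
  rw [zero_div] at this
  refine this.congr (fun t => ?_)
  have := Real.exp_pos (-Real.pi * t)
  simp only [Pi.div_apply]
  field_simp
lemma tU_lim : Tendsto (fun t => t * U t) atTop (𝓝 0) := by
  have h1 : Tendsto (fun t : ℝ => t * Real.exp (-Real.pi * t)) atTop (𝓝 0) := by
    have := (Real.tendsto_pow_mul_exp_neg_atTop_nhds_zero 1).comp (tendsto_id.const_mul_atTop Real.pi_pos)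
    have := this.const_mul (1 / Real.pi)
    rw [mul_zero] at this
    refine this.congr (fun t => ?_)
    have := Real.pi_pos
    simp only [Function.comp, id, pow_one]
    rw [neg_mul]
    field_simp
  have := h1.mul UP_lim
  rw [zero_mul] at this
  refine this.congr (fun t => ?_)
  have := Real.exp_pos (-Real.pi * t)
  field_simp

lemma LD_lim : Tendsto (fun t => L t / dR t ^ 2) atTop (𝓝 0) := by
  have hU : Tendsto U atTop (𝓝 0) := by
    have := UA_lim.mul A_lim
    rw [zero_mul] at this
    refine this.congr' ?_
    filter_upwards [eventually_gt_atTop 0] with t ht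
    have := A_pos ht
    field_simp
  have h4 := ((A_lim.pow 2).add (A_lim.mul B_lim)).add (B_lim.pow 2)
  have h6 := (((((A_lim.add (B_lim.const_mul 2)).mul ((A_lim.const_mul 2).add B_lim)).mul (B_lim.sub A_lim))).div_const 2)
  have hDU := (((((E_lim.pow 2).sub h4).div_const 12).mul h4).add ((E_lim.mul hU).div_const 3)).sub
    (((E_lim.mul h6).sub (h4.pow 2)).div_const 2)
  have hg := (((A_lim.pow 2).const_mul 2).add ((A_lim.const_mul 5).mul B_lim)).add ((B_lim.pow 2).const_mul 5)
  have hg2 := ((E_lim.const_mul (5 / 6)).mul hg).add (((((A_lim.pow 3).add (((A_lim.pow 2).const_mul 3).mul B_lim)).add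
    ((A_lim.const_mul 3).mul (B_lim.pow 2))).add ((B_lim.pow 3).const_mul 2)).const_mul (5 / 3))
  have hd := ((B_lim.mul (A_lim.add B_lim)).pow 2).div_const 256
  have := UA_lim.mul ((((hDU.const_mul 2).mul hg).sub (hU.mul hg2)).div (hd.pow 2) (by norm_num))
  rw [zero_mul] at this
  refine this.congr' ?_
  filter_upwards [eventually_gt_atTop 0] with t ht
  have hA := A_pos ht
  have hB := B_pos ht
  simp only [Pi.div_apply]
  rw [L, dR]
  change U t / A t * ((2 * DU t * g t - U t * g2 t) / ((B t * (A t + B t)) ^ 2 / 256) ^ 2) = _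
  rw [G]
  field_simp

lemma L_nonneg {t : ℝ} (ht : 0 < t) : 0 ≤ L t := by
  have hder : ∀ s ∈ Set.Ioi (0 : ℝ), HasDerivAt (fun s => L s * dR s ^ (-(11 / 6) : ℝ))
      (-2 * Real.pi * (dR s ^ (-(11 / 6) : ℝ) * (dR s * (600 * (A s ^ 2 + A s * B s + B s ^ 2 - E s ^ 2) * G s + 640 * A s * U s ^ 2)))) s := by
    intro s hs
    have hp := dR_pos hs
    refine ((L_der hs).mul ((dR_der hs).rpow_const (p := -(11 / 6)) (Or.inl hp.ne'))).congr_deriv ?_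
    rw [Real.rpow_sub_one hp.ne']
    field_simp
    ring
  have hanti : AntitoneOn (fun s => L s * dR s ^ (-(11 / 6) : ℝ)) (Set.Ioi 0) := by
    refine antitoneOn_of_deriv_nonpos (convex_Ioi 0) (fun s hs => (hder s hs).continuousAt.continuousWithinAt)
      (fun s hs => (hder s (interior_subset hs)).differentiableAt.differentiableWithinAt) (fun s hs => ?_)
    have hs := interior_subset hs
    rw [(hder s hs).deriv]
    have hp := dR_pos hs
    have hG := G_pos hs
    have hA := A_pos hs
    have hE := sub_nonneg.2 (E_sq hs)
    have := Real.pi_pos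
    rw [neg_mul, neg_mul, neg_nonpos]
    positivity
  have hlim : Tendsto (fun s => L s * dR s ^ (-(11 / 6) : ℝ)) atTop (𝓝 0) := by
    have hd0 : Tendsto dR atTop (𝓝 0) := by
      have := (((A_lim.mul B_lim).mul (A_lim.add B_lim)).pow 2).div_const 256
      norm_num at this
      exact this
    refine squeeze_zero_norm' ?_ (tendsto_zero_iff_norm_tendsto_zero.1 LD_lim)
    filter_upwards [eventually_gt_atTop 0, hd0.eventually (ge_mem_nhds one_pos)] with s hs h1
    have hp := dR_pos hs
    rw [norm_mul, norm_div, div_eq_mul_inv]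
    refine mul_le_mul_of_nonneg_left ?_ (norm_nonneg _)
    rw [Real.norm_of_nonneg (by positivity), Real.norm_of_nonneg (by positivity), ← Real.rpow_natCast,
      ← Real.rpow_neg hp.le]
    exact Real.rpow_le_rpow_of_exponent_ge hp h1 (by norm_num)
  have : 0 ≤ L t * dR t ^ (-(11 / 6) : ℝ) := by
    refine le_of_tendsto hlim ?_
    filter_upwards [eventually_ge_atTop t] with s hs
    exact hanti ht (ht.trans_le hs) hs
  exact nonneg_of_mul_nonneg_left this (Real.rpow_pos_of_pos (dR_pos ht) _)

lemma key_ineq {t : ℝ} (ht : 0 < t) : U t ^ 2 ≤ 18 / Real.pi ^ 2 * G t := by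
  have hder : ∀ s ∈ Set.Ioi (0 : ℝ), HasDerivAt (fun s => U s ^ 2 / G s)
      (-2 * Real.pi * (L s / G s ^ 2)) s := by
    intro s hs
    have hp := G_pos hs
    refine (((U_der hs).pow 2).div (G_der hs) hp.ne').congr_deriv ?_
    rw [L]
    simp only [Pi.pow_apply]
    push_cast
    field_simp
    ring
  have hanti : AntitoneOn (fun s => U s ^ 2 / G s) (Set.Ioi 0) := by
    refine antitoneOn_of_deriv_nonpos (convex_Ioi 0) (fun s hs => (hder s hs).continuousAt.continuousWithinAt)
      (fun s hs => (hder s (interior_subset hs)).differentiableAt.differentiableWithinAt) (fun s hs => ?_)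
    have hs := interior_subset hs
    rw [(hder s hs).deriv]
    have hp := L_nonneg hs
    have := Real.pi_pos
    rw [neg_mul, neg_mul, neg_nonpos]
    positivity
  have hinv : ∀ s : ℝ, 0 < s → U (1 / s) ^ 2 / G (1 / s) =
      (6 / Real.pi * (A s ^ 2 + A s * B s + B s ^ 2) - s * U s) ^ 2 / (B s ^ 3 * (2 * B s ^ 2 + 5 * A s * B s + 5 * A s ^ 2)) := by
    intro s hs
    have hA := A_pos hs
    have hB := B_pos hs
    have hpi := Real.pi_pos
    simp only [U, G, g, A_inv hs, B_inv hs, E_inv hs]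
    rw [div_eq_div_iff (by positivity) (by positivity)]
    ring
  have hlim : Tendsto (fun s => U (1 / s) ^ 2 / G (1 / s)) atTop (𝓝 (18 / Real.pi ^ 2)) := by
    have h4 := ((A_lim.pow 2).add (A_lim.mul B_lim)).add (B_lim.pow 2)
    have h := (((h4.const_mul (6 / Real.pi)).sub tU_lim).pow 2).div ((B_lim.pow 3).mul ((((B_lim.pow 2).const_mul 2).add
      ((A_lim.const_mul 5).mul B_lim)).add ((A_lim.pow 2).const_mul 5))) (by norm_num)
    have e : ((6 / Real.pi * (0 ^ 2 + 0 * 1 + 1 ^ 2) - 0) ^ 2 / (1 ^ 3 * (2 * 1 ^ 2 + 5 * 0 * 1 + 5 * 0 ^ 2))) = 18 / Real.pi ^ 2 := by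
      have := Real.pi_pos
      field_simp
      norm_num
    rw [e] at h
    refine h.congr' ?_
    filter_upwards [eventually_gt_atTop 0] with s hs
    exact (hinv s hs).symm
  have hle : U t ^ 2 / G t ≤ 18 / Real.pi ^ 2 := by
    refine ge_of_tendsto hlim ?_
    filter_upwards [eventually_ge_atTop (1 / t)] with s hs
    have hs0 : 0 < s := lt_of_lt_of_le (by positivity) hs
    refine hanti (by simpa using hs0) ht ?_
    rw [div_le_iff₀ hs0]
    rwa [div_le_iff₀ ht, mul_comm] at hs
  rwa [div_le_iff₀ (G_pos ht)] at hle

end SP8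


namespace SP8
open Complex Filter Topology Asymptotics MeasureTheory

local notation "I∞" => Filter.comap Complex.im Filter.atTop

lemma prim (F : ℂ → ℂ) (hF : ∀ z : ℂ, 0 < z.im → DifferentiableAt ℂ F z) :
    ∃ W : ℂ → ℂ, ∀ z : ℂ, 0 < z.im → HasDerivAt W (F z) z := by
  have him : ∀ w ∈ Metric.ball (0 : ℂ) 1, 1 - w ≠ 0 ∧ 0 < (I * (1 + w) / (1 - w)).im := by
    intro w hw
    have hw' : ‖w‖ < 1 := by simpa using hw
    have h1 : 1 - w ≠ 0 := fun h => by
      rw [← sub_eq_zero.1 h] at hw'; simp at hw'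
    refine ⟨h1, ?_⟩
    have h2 : (I * (1 + w) / (1 - w)).im = (1 - normSq w) / normSq (1 - w) := by
      rw [div_im]
      simp only [normSq_apply, mul_im, mul_re, I_re, I_im, add_re, add_im, one_re, one_im, sub_re, sub_im]
      ring
    rw [h2]
    refine div_pos ?_ (normSq_pos.2 h1)
    rw [normSq_eq_norm_sq]
    nlinarith [norm_nonneg w]
  have hd : DifferentiableOn ℂ (fun w => F (I * (1 + w) / (1 - w)) * (2 * I / (1 - w) ^ 2)) (Metric.ball 0 1) := by
    intro w hw
    obtain ⟨h1, h2⟩ := him w hw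
    have h3 : DifferentiableAt ℂ (fun w : ℂ => I * (1 + w) / (1 - w)) w := by
      apply DifferentiableAt.div _ _ h1 <;> fun_prop
    have h4 : DifferentiableAt ℂ (fun w : ℂ => 2 * I / (1 - w) ^ 2) w := by
      exact (differentiableAt_const (2 * I)).div (((differentiableAt_const (1 : ℂ)).sub differentiableAt_id).pow 2) (pow_ne_zero 2 h1)
    exact (((hF _ h2).comp w h3).mul h4).differentiableWithinAt
  obtain ⟨V, hV⟩ := hd.isExactOn_ball
  refine ⟨fun z => V ((z - I) / (z + I)), fun z hz => ?_⟩
  have hzi : z + I ≠ 0 := ne0 (by simp; linarith)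
  have hb : (z - I) / (z + I) ∈ Metric.ball (0 : ℂ) 1 := by
    rw [mem_ball_zero_iff, norm_div, div_lt_one (norm_pos_iff.2 hzi)]
    rw [← sq_lt_sq₀ (norm_nonneg _) (norm_nonneg _), ← normSq_eq_norm_sq, ← normSq_eq_norm_sq]
    simp only [normSq_apply, add_re, add_im, sub_re, sub_im, I_re, I_im]
    nlinarith
  have h1 := hV _ hb
  have h2 : HasDerivAt (fun z : ℂ => (z - I) / (z + I)) (2 * I / (z + I) ^ 2) z := by
    refine (((hasDerivAt_id z).sub_const I).div ((hasDerivAt_id z).add_const I) hzi).congr_deriv ?_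
    simp only [id]; field_simp; ring
  refine (HasDerivAt.comp z h1 h2).congr_deriv ?_
  have e1 : 1 - (z - I) / (z + I) = 2 * I / (z + I) := by field_simp; ring
  have e2 : I * (1 + (z - I) / (z + I)) / (2 * I / (z + I)) = z := by
    have := I_ne_zero
    field_simp; ring
  beta_reduce
  rw [e1, e2]
  have := I_ne_zero
  field_simp

noncomputable def ee (s : ℝ) (z : ℂ) : ℂ := cexp (Real.pi * I * s * z)
noncomputable def vl (σ t : ℝ) : ℂ := σ + t * I
noncomputable def KP (P : ℂ → ℂ) (σ t0 s : ℝ) : ℂ :=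
  ∫ t in Set.Ioi t0, P (vl σ t) / (vl σ t) ^ 4 * ee s (2 * σ + -1 / (vl σ t)) * I
noncomputable def MP (P : ℂ → ℂ) (s : ℝ) : ℂ :=
  ∫ t in Set.Ioi (1 : ℝ), P (vl 0 t) * ee s (vl 0 t) * I
noncomputable def IP (P : ℂ → ℂ) (ε : ℂ) (s : ℝ) : ℂ :=
  2 * KP P 0 1 s - KP P (-1 / 2) (1 / 2) s - KP P (1 / 2) (1 / 2) s + 2 * ε * MP P s

@[simp] lemma vl_im (σ t : ℝ) : (vl σ t).im = t := by simp [vl]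
@[simp] lemma vl_re (σ t : ℝ) : (vl σ t).re = σ := by simp [vl]
lemma vl_cont (σ : ℝ) : Continuous (vl σ) := by unfold vl; fun_prop
lemma vl_der (σ t : ℝ) : HasDerivAt (vl σ) I t := by
  exact (((Complex.ofRealCLM.hasDerivAt (x := t)).mul_const I).const_add (σ : ℂ)).congr_deriv (by simp)
lemma vl_tt (σ : ℝ) : Tendsto (vl σ) atTop I∞ := by
  rw [tendsto_comap_iff]
  exact tendsto_id.congr (fun t => by simp)
lemma ee_add (s : ℝ) (z w : ℂ) : ee s (z + w) = ee s z * ee s w := by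
  rw [ee, ee, ee, ← exp_add]; congr 1; ring
lemma ee_norm (s : ℝ) (z : ℂ) : ‖ee s z‖ = Real.exp (-Real.pi * s * z.im) := by
  rw [ee, norm_exp]; congr 1; simp
lemma ee_le {s : ℝ} (hs : 0 ≤ s) {z : ℂ} (hz : 0 ≤ z.im) : ‖ee s z‖ ≤ 1 := by
  rw [ee_norm, Real.exp_le_one_iff]
  have := Real.pi_pos
  have : 0 ≤ Real.pi * s * z.im := by positivity
  linarith
lemma ee_diff (s : ℝ) : Differentiable ℂ (ee s) := by unfold ee; fun_prop

lemma intIoi {f : ℝ → ℂ} {c r : ℝ} (hr : 0 < r) (hf : ContinuousOn f (Set.Ici c))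
    (ho : f =O[atTop] fun x => Real.exp (-r * x)) : IntegrableOn f (Set.Ioi c) :=
  integrableOn_Ici_iff_integrableOn_Ioi (by finiteness) |>.mp <|
    (hf.locallyIntegrableOn measurableSet_Ici).integrableOn_of_isBigO_atTop
    ho ⟨Set.Ioi r, Ioi_mem_atTop r, exp_neg_integrableOn_Ioi r hr⟩

section
variable {P : ℂ → ℂ} (hd : ∀ z : ℂ, 0 < z.im → DifferentiableAt ℂ P z)
  (hO : P =O[I∞] (fun z => Real.exp (-Real.pi * z.im)))

include hd in
lemma P_cont (σ : ℝ) {t0 : ℝ} (h0 : 0 < t0) : ContinuousOn (fun t => P (vl σ t)) (Set.Ici t0) := by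
  intro t ht
  have : 0 < (vl σ t).im := by simpa using h0.trans_le ht
  exact ((hd _ this).continuousAt.comp (f := vl σ) (vl_cont σ).continuousAt).continuousWithinAt

include hO in
lemma P_O (σ : ℝ) : (fun t => P (vl σ t)) =O[atTop] fun t => Real.exp (-Real.pi * t) := by
  exact (hO.comp_tendsto (vl_tt σ)).congr (fun _ => rfl) (fun t => by simp [Function.comp])

lemma im_ge {z : ℂ} (hz : 1 ≤ z.im) : 1 ≤ ‖z‖ := hz.trans ((le_abs_self _).trans (abs_im_le_norm z))

include hd hO in
lemma K_int (σ : ℝ) {t0 s : ℝ} (h0 : 0 < t0) (hs : 0 ≤ s) :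
    IntegrableOn (fun t => P (vl σ t) / (vl σ t) ^ 4 * ee s (-1 / (vl σ t)) * I) (Set.Ioi t0) := by
  have hne : ∀ t ∈ Set.Ici t0, vl σ t ≠ 0 := fun t ht => ne0 (by simpa using h0.trans_le ht)
  refine intIoi Real.pi_pos ?_ ?_
  · have hv := (vl_cont σ).continuousOn (s := Set.Ici t0)
    refine (((P_cont hd σ h0).div (hv.pow 4) (fun t ht => pow_ne_zero 4 (hne t ht))).mul ?_).mul continuousOn_const
    exact (ee_diff s).continuous.comp_continuousOn (continuousOn_const.div hv hne)
  · refine IsBigO.trans (IsBigO.of_bound 1 ?_) (P_O hO σ)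
    filter_upwards [eventually_ge_atTop 1] with t ht
    have h1 := ee_le hs (z := -1 / vl σ t) (im_inv_pos (by simp; linarith)).le
    have h2 : 1 ≤ ‖vl σ t‖ := im_ge (by simpa using ht)
    rw [norm_mul, norm_mul, norm_div, norm_I, mul_one, one_mul, norm_pow]
    refine (mul_le_of_le_one_right (by positivity) h1).trans ?_
    exact div_le_self (norm_nonneg _) (one_le_pow₀ h2)

include hd hO in
lemma M_int {s : ℝ} (hs : 0 ≤ s) :
    IntegrableOn (fun t => P (vl 0 t) * ee s (vl 0 t) * I) (Set.Ioi 1) := by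
  refine intIoi Real.pi_pos ?_ ?_
  · exact ((P_cont hd 0 one_pos).mul ((ee_diff s).continuous.comp_continuousOn (vl_cont 0).continuousOn)).mul continuousOn_const
  · refine IsBigO.trans (IsBigO.of_bound 1 ?_) (P_O hO 0)
    filter_upwards [eventually_ge_atTop 1] with t ht
    have h1 := ee_le hs (z := vl 0 t) (by simp; linarith)
    rw [norm_mul, norm_mul, norm_I, mul_one, one_mul]
    exact mul_le_of_le_one_right (by positivity) h1

lemma segm {W F : ℂ → ℂ} (hW : ∀ z : ℂ, 0 < z.im → HasDerivAt W (F z) z) (σ τ : ℝ) {Y C : ℝ} (hY : 0 < Y)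
    (hC : ∀ x : ℝ, |x| ≤ max |σ| |τ| → ‖F (vl x Y)‖ ≤ C) : ‖W (vl τ Y) - W (vl σ Y)‖ ≤ C * |τ - σ| := by
  have h1 : ∀ x ∈ Set.uIcc σ τ, HasDerivWithinAt (fun x : ℝ => W (vl x Y)) (F (vl x Y)) (Set.uIcc σ τ) x := by
    intro x _
    have h2 : HasDerivAt (fun x : ℝ => vl x Y) 1 x := by
      simpa [vl] using (Complex.ofRealCLM.hasDerivAt (x := x)).add_const (Y * I)
    have := HasDerivAt.comp x (hW (vl x Y) (by simpa using hY)) h2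
    rw [mul_one] at this
    exact this.hasDerivWithinAt
  have h3 := (convex_uIcc σ τ).norm_image_sub_le_of_norm_hasDerivWithin_le h1 (C := C) (fun x hx => hC x ?_)
    Set.left_mem_uIcc Set.right_mem_uIcc
  · simpa using h3
  · rcases Set.mem_uIcc.1 hx with h | h
    · exact abs_le_max_abs_abs h.1 h.2
    · rw [max_comm]; exact abs_le_max_abs_abs h.1 h.2

include hd hO in
lemma contour {ε : ℂ} (hT : ∀ z : ℂ, 0 < z.im → ((z + 1) ^ 2 * P (-1 / (z + 1)) - 2 * (z ^ 2 * P (-1 / z))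
      + (z - 1) ^ 2 * P (-1 / (z - 1))) = 2 * ε * P z) {s : ℝ} (hs : 0 ≤ s) :
    ∃ (W : ℂ → ℂ) (W0 : ℂ), (∀ z : ℂ, 0 < z.im → HasDerivAt W (z ^ 2 * P (-1 / z) * ee s z) z) ∧
      Tendsto (fun t => W (vl 0 (1 / t))) atTop (𝓝 W0) ∧
      Tendsto (fun Y => ee s (-1) * W (vl 1 Y) + ee s 1 * W (vl (-1) Y) - 2 * W (vl 0 Y)) atTop
        (𝓝 (IP P ε s + (ee s (-1) + ee s 1 - 2) * W0)) := by
  obtain ⟨W, hW⟩ := prim (fun z => z ^ 2 * P (-1 / z) * ee s z) (fun z hz => by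
    have h1 : DifferentiableAt ℂ (fun z : ℂ => -1 / z) z :=
      (differentiableAt_const _).div differentiableAt_id (ne0 hz)
    exact ((differentiableAt_id.pow 2).mul ((hd _ (im_inv_pos hz)).comp z h1)).mul (ee_diff s z))
  have hWt : ∀ w : ℂ, 0 < w.im → HasDerivAt (fun w => W (-1 / w)) (P w / w ^ 4 * ee s (-1 / w)) w := by
    intro w hw
    have w0 := ne0 hw
    have h1 : HasDerivAt (fun z : ℂ => -1 / z) (1 / w ^ 2) w := by
      simpa [div_eq_mul_inv] using (hasDerivAt_inv w0).const_mul (-1)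
    refine (HasDerivAt.comp w (hW _ (im_inv_pos hw)) h1).congr_deriv ?_
    rw [show -1 / (-1 / w) = w by field_simp]
    field_simp
  have hv : ∀ σ t : ℝ, 0 < t → HasDerivAt (fun t => W (-1 / vl σ t)) (P (vl σ t) / (vl σ t) ^ 4 * ee s (-1 / (vl σ t)) * I) t := by
    intro σ t ht
    exact HasDerivAt.comp (h₂ := fun w => W (-1 / w)) t (hWt (vl σ t) (by simpa using ht)) (vl_der σ t)
  obtain ⟨W0, hW0⟩ : ∃ W0, Tendsto (fun t => W (-1 / vl 0 t)) atTop (𝓝 W0) :=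
    ⟨_, tendsto_limUnder_of_hasDerivAt_of_integrableOn_Ioi (a := 1) (fun t ht => hv 0 t (one_pos.trans ht)) (K_int hd hO 0 one_pos hs)⟩
  have hPz : Tendsto P I∞ (𝓝 0) := by
    refine hO.trans_tendsto (Real.tendsto_exp_atBot.comp ?_)
    exact tendsto_comap.const_mul_atTop_of_neg (by simpa using Real.pi_pos)
  have hlim : ∀ σ : ℝ, Tendsto (fun t => W (-1 / vl σ t)) atTop (𝓝 W0) := by
    intro σ
    suffices h : Tendsto (fun t => W (-1 / vl σ t) - W (-1 / vl 0 t)) atTop (𝓝 0) by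
      simpa using h.add hW0
    rw [Metric.tendsto_atTop]
    intro δ hδ
    have h1 := (Metric.tendsto_nhds.1 hPz) (δ / (|σ| + 1)) (by positivity)
    rw [eventually_comap, eventually_atTop] at h1
    obtain ⟨Y0, hY0⟩ := h1
    refine ⟨max Y0 1, fun Y hY => ?_⟩
    have hY1 : 1 ≤ Y := (le_max_right _ _).trans hY
    have := segm (W := fun w => W (-1 / w)) hWt 0 σ (Y := Y) (C := δ / (|σ| + 1)) (by linarith) (fun x _ => ?_)
    · rw [dist_zero_right]
      refine this.trans_lt ?_
      rw [sub_zero, div_mul_eq_mul_div, div_lt_iff₀ (by positivity)]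
      nlinarith [abs_nonneg σ]
    · have h2 := hY0 Y ((le_max_left _ _).trans hY) (vl x Y) (by simp)
      rw [dist_zero_right] at h2
      refine le_trans ?_ h2.le
      have h1 := ee_le hs (z := -1 / vl x Y) (im_inv_pos (by simp; linarith)).le
      have h2 : 1 ≤ ‖vl x Y‖ := im_ge (by simpa using hY1)
      rw [norm_mul, norm_div, norm_pow]
      refine (mul_le_of_le_one_right (by positivity) h1).trans ?_
      exact div_le_self (norm_nonneg _) (one_le_pow₀ h2)
  have hK : ∀ σ t0 : ℝ, 0 < t0 → KP P σ t0 s = ee s (2 * σ) * (W0 - W (-1 / vl σ t0)) := by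
    intro σ t0 h0
    have := integral_Ioi_of_hasDerivAt_of_tendsto' (a := t0) (fun t ht => hv σ t (h0.trans_le ht)) (K_int hd hO σ h0 hs) (hlim σ)
    rw [KP, ← this, ← integral_const_mul]
    congr 1; ext t
    rw [ee_add]; ring
  have hN : ∀ t : ℝ, 0 < t → HasDerivAt (fun Y => ee s (-1) * W (vl 1 Y) + ee s 1 * W (vl (-1) Y) - 2 * W (vl 0 Y))
      (2 * ε * (P (vl 0 t) * ee s (vl 0 t) * I)) t := by
    intro t ht
    have h1 (σ : ℝ) := HasDerivAt.comp t (hW (vl σ t) (by simpa using ht)) (vl_der σ t)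
    refine ((((h1 1).const_mul (ee s (-1))).add ((h1 (-1)).const_mul (ee s 1))).sub ((h1 0).const_mul 2)).congr_deriv ?_
    have e1 : vl 1 t = vl 0 t + 1 := by simp [vl]; ring
    have e2 : vl (-1) t = vl 0 t - 1 := by simp [vl]; ring
    have e3 : ee s (-1) * ee s (vl 0 t + 1) = ee s (vl 0 t) := by rw [← ee_add]; congr 1; ring
    have e4 : ee s 1 * ee s (vl 0 t - 1) = ee s (vl 0 t) := by rw [← ee_add]; congr 1; ring
    have h2 := hT (vl 0 t) (by simpa using ht)
    rw [e1, e2]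
    linear_combination (I * ((vl 0 t + 1) ^ 2 * P (-1 / (vl 0 t + 1)))) * e3 +
      (I * ((vl 0 t - 1) ^ 2 * P (-1 / (vl 0 t - 1)))) * e4 + (I * ee s (vl 0 t)) * h2
  have hNl := tendsto_limUnder_of_hasDerivAt_of_integrableOn_Ioi (a := 1) (fun t ht => hN t (one_pos.trans ht)) ((M_int hd hO hs).const_mul _)
  have hM := integral_Ioi_of_hasDerivAt_of_tendsto' (a := 1) (fun t ht => hN t (one_pos.trans_le ht)) ((M_int hd hO hs).const_mul _) hNl
  refine ⟨W, W0, hW, hW0.congr (fun t => ?_), ?_⟩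
  · congr 1
    simp only [vl, ofReal_zero, zero_add, ofReal_div, ofReal_one]
    rcases eq_or_ne t 0 with rfl | h
    · simp
    · have : (t : ℂ) ≠ 0 := by exact_mod_cast h
      have := I_ne_zero
      field_simp
      rw [I_sq]
  · convert hNl using 2
    rw [integral_const_mul] at hM
    change 2 * ε * MP P s = _ at hM
    rw [IP, hK 0 1 one_pos, hK _ _ (by norm_num), hK _ _ (by norm_num), hM]
    have i1 : -1 / vl (-1 / 2) (1 / 2) = vl 1 1 := by
      have : (-1 + I : ℂ) ≠ 0 := ne0 (by simp)
      simp only [vl]; push_cast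
      rw [div_eq_iff (ne0 (by simp))]
      linear_combination (-1 / 2 : ℂ) * I_sq
    have i2 : -1 / vl (1 / 2) (1 / 2) = vl (-1) 1 := by
      simp only [vl]; push_cast
      rw [div_eq_iff (ne0 (by simp))]
      linear_combination (-1 / 2 : ℂ) * I_sq
    have i3 : -1 / vl 0 1 = vl 0 1 := by
      simp only [vl]; push_cast
      rw [div_eq_iff (ne0 (by simp))]
      linear_combination (-1 : ℂ) * I_sq
    rw [i1, i2, i3]
    have j0 : ee s (2 * ((0 : ℝ) : ℂ)) = 1 := by simp [ee]
    have j1 : (2 * ((-1 / 2 : ℝ) : ℂ)) = -1 := by push_cast; ring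
    have j2 : (2 * ((1 / 2 : ℝ) : ℂ)) = 1 := by push_cast; ring
    rw [j0, j1, j2]
    ring

end
end SP8


namespace SP8
open Complex Filter Topology Asymptotics MeasureTheory

local notation "I∞" => Filter.comap Complex.im Filter.atTop

noncomputable def Pa (z : ℂ) : ℂ := u z ^ 2 / dl z
noncomputable def Pb (z : ℂ) : ℂ := -(a z ^ 3 * (2 * a z ^ 2 + 5 * a z * b z + 5 * b z ^ 2)) / (2 * dl z)
noncomputable def kp : ℂ := 36 / Real.pi ^ 2

lemma dl_S (z : ℂ) (hz : 0 < z.im) : dl (-1 / z) = z ^ 12 * dl z := by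
  rw [dl, dl, e4_S z hz, e6_S z hz]; ring
lemma dl_T (z : ℂ) (hz : 0 < z.im) : dl (z + 1) = dl z := by
  rw [dl, dl, e4_T z hz, e6_T z hz]
lemma u_T (z : ℂ) (hz : 0 < z.im) : u (z + 1) = u z := by
  rw [u, u, e4_T z hz, e6_T z hz, e2_T z hz]
lemma Pa_T (z : ℂ) (hz : 0 < z.im) : Pa (z + 1) = Pa z := by
  rw [Pa, Pa, dl_T z hz, u_T z hz]
lemma Pb_T (z : ℂ) (hz : 0 < z.im) : Pb (z + 1) = -1 * Pb z := by
  rw [Pb, Pb, dl_T z hz, a_T z hz, b_T z hz]; ring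

lemma dl_diff (z : ℂ) (hz : 0 < z.im) : DifferentiableAt ℂ dl z := by
  unfold dl
  exact (((e4_diff z hz).pow 3).sub ((e6_diff z hz).pow 2)).div_const _
lemma Pa_diff (z : ℂ) (hz : 0 < z.im) : DifferentiableAt ℂ Pa z :=
  ((((e2_diff z hz).mul (e4_diff z hz)).sub (e6_diff z hz)).pow 2).div (dl_diff z hz) (dl_ne z hz)
lemma Pb_diff (z : ℂ) (hz : 0 < z.im) : DifferentiableAt ℂ Pb z := by
  have ha := a_diff z hz
  have hb := b_diff z hz
  refine DifferentiableAt.div ?_ ((dl_diff z hz).const_mul 2) (mul_ne_zero two_ne_zero (dl_ne z hz))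
  fun_prop

lemma Pa_S (z : ℂ) (hz : 0 < z.im) : z ^ 2 * Pa (-1 / z) =
    z ^ 2 * Pa z - 12 * I / Real.pi * (z * (e4 z * (u z / dl z))) - kp * (e4 z ^ 2 / dl z) := by
  have h0 := ne0 hz
  have hd := dl_ne z hz
  have hp := pi0
  rw [Pa, Pa, kp, u_S z hz, dl_S z hz]
  field_simp
  linear_combination 36 * e4 z ^ 2 * I_sq

lemma Pb_S (z : ℂ) (hz : 0 < z.im) : z ^ 2 * Pb (-1 / z) =
    b z ^ 3 * (2 * b z ^ 2 + 5 * a z * b z + 5 * a z ^ 2) / (2 * dl z) := by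
  have h0 := ne0 hz
  have hd := dl_ne z hz
  rw [Pb, a_S z hz, b_S z hz, dl_S z hz]
  field_simp

lemma imadd {z : ℂ} (hz : 0 < z.im) : 0 < (z + 1).im := by simpa using hz
lemma imsub {z : ℂ} (hz : 0 < z.im) : 0 < (z - 1).im := by simpa using hz

/-- first differences -/
lemma Pa_d (z : ℂ) (hz : 0 < z.im) : (z + 1) ^ 2 * Pa (-1 / (z + 1)) - z ^ 2 * Pa (-1 / z) =
    (2 * z + 1) * Pa z - 12 * I / Real.pi * (e4 z * (u z / dl z)) := by
  rw [Pa_S z hz, Pa_S _ (imadd hz), Pa_T z hz, e4_T z hz, u_T z hz, dl_T z hz]; ring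
lemma Pb_d (z : ℂ) (hz : 0 < z.im) : (z + 1) ^ 2 * Pb (-1 / (z + 1)) - z ^ 2 * Pb (-1 / z) = - Pb z := by
  have hd := dl_ne z hz
  rw [Pb_S z hz, Pb_S _ (imadd hz), dl_T z hz, a_T z hz, b_T z hz, Pb]
  field_simp
  ring

lemma Pa_dd (z : ℂ) (hz : 0 < z.im) : ((z + 1) ^ 2 * Pa (-1 / (z + 1)) - 2 * (z ^ 2 * Pa (-1 / z))
      + (z - 1) ^ 2 * Pa (-1 / (z - 1))) = 2 * 1 * Pa z := by
  have h1 := Pa_d z hz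
  have h2 := Pa_d (z - 1) (imsub hz)
  have t1 := Pa_T _ (imsub hz)
  have t2 := e4_T _ (imsub hz)
  have t3 := u_T _ (imsub hz)
  have t4 := dl_T _ (imsub hz)
  rw [sub_add_cancel] at h2 t1 t2 t3 t4
  rw [← t1, ← t2, ← t3, ← t4] at h2
  linear_combination h1 - h2
lemma Pb_dd (z : ℂ) (hz : 0 < z.im) : ((z + 1) ^ 2 * Pb (-1 / (z + 1)) - 2 * (z ^ 2 * Pb (-1 / z))
      + (z - 1) ^ 2 * Pb (-1 / (z - 1))) = 2 * -1 * Pb z := by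
  have h1 := Pb_d z hz
  have h2 := Pb_d (z - 1) (imsub hz)
  have t1 := Pb_T _ (imsub hz)
  rw [sub_add_cancel] at h2 t1
  linear_combination h1 - h2 + t1

lemma up2_lim : Tendsto (fun z => u z / p z ^ 2) I∞ (𝓝 720) := by
  have h2 : (fun z => u z / p z ^ 2 - 720) =O[I∞] (fun z => p z ^ 2) := by
    refine (u_as.mul (isBigO_refl (fun z => (p z ^ 2)⁻¹) I∞)).congr (fun z => ?_) (fun z => ?_)
    · have := p_ne z
      field_simp
    · have := p_ne z
      field_simp
  simpa using (h2.trans_tendsto (show Tendsto (fun z => p z ^ 2) I∞ (𝓝 0) by simpa using p_lim.pow 2)).add_const 720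

lemma Hev : ∀ᶠ z : ℂ in I∞, 0 < z.im := preimage_mem_comap (Ioi_mem_atTop 0)

lemma dlp_lim : Tendsto (fun z => dl z / p z ^ 2) I∞ (𝓝 1) := by
  have h := (((ap_lim.mul b_lim).mul (a_lim.add b_lim)).pow 2).div_const 256
  rw [show ((16 : ℂ) * 1 * (0 + 1)) ^ 2 / 256 = 1 by norm_num] at h
  refine h.congr' ?_
  filter_upwards [Hev] with z hz
  rw [dl_ab z hz]
  have := p_ne z
  field_simp

lemma pdl_lim : Tendsto (fun z => p z ^ 2 / dl z) I∞ (𝓝 1) := by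
  simpa using dlp_lim.inv₀ one_ne_zero

lemma ud_lim : Tendsto (fun z => u z / dl z) I∞ (𝓝 720) := by
  have h := up2_lim.mul pdl_lim
  rw [mul_one] at h
  refine h.congr (fun z => ?_)
  have := p_ne z
  field_simp

lemma Pa_O : Pa =O[I∞] (fun z => p z ^ 2) := by
  refine ((ud_lim.mul up2_lim).isBigO_one ℂ |>.mul (isBigO_refl (fun z => p z ^ 2) I∞)).congr (fun z => ?_) (fun z => by ring)
  have := p_ne z
  rw [Pa]; field_simp
lemma Pb_O : Pb =O[I∞] p := by
  have h := (((ap_lim.pow 3).mul (((((a_lim.pow 2).const_mul 2).add ((a_lim.const_mul 5).mul b_lim))).add ((b_lim.pow 2).const_mul 5))).mul pdl_lim).const_mul (-1 / 2)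
  refine ((h.isBigO_one ℂ).mul (isBigO_refl p I∞)).congr (fun z => ?_) (fun z => by ring)
  have := p_ne z
  rw [Pb]; field_simp

lemma p_exp : (fun z => p z) =O[I∞] (fun z => Real.exp (-Real.pi * z.im)) := by
  refine IsBigO.of_bound 1 (Eventually.of_forall (fun z => ?_))
  rw [p_norm, Real.norm_of_nonneg (Real.exp_pos _).le, one_mul]
lemma Pa_hO : Pa =O[I∞] (fun z => Real.exp (-Real.pi * z.im)) := by
  refine (Pa_O.trans ?_).trans p_exp
  simpa using p_small (m := 1) (n := 2) (by norm_num)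
lemma Pb_hO : Pb =O[I∞] (fun z => Real.exp (-Real.pi * z.im)) := Pb_O.trans p_exp

noncomputable def Phi (P : ℂ → ℂ) (z : ℂ) : ℂ := z ^ 2 * P (-1 / z)

lemma polyO (Q : ℂ × ℂ × ℂ → ℂ) (hQ : Continuous Q) : (fun z => Q (a z, b z, p z)) =O[I∞] (fun _ => (1 : ℂ)) :=
  ((hQ.tendsto _).comp (a_lim.prodMk_nhds (b_lim.prodMk_nhds p_lim))).isBigO_one ℂ

lemma diffO : (fun z => e4 z ^ 2 - b z ^ 3 * (2 * b z ^ 2 + 5 * a z * b z + 5 * a z ^ 2) / 2) =O[I∞] (fun z => p z ^ 2) := by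
  have h1 : (fun z => (e4 z - (1 + 240 * p z ^ 2)) * (e4 z + 1 + 240 * p z ^ 2)) =O[I∞] (fun z => p z ^ 2 * 1) := by
    refine (e4_as.trans (p_small (by norm_num))).mul ?_
    exact Tendsto.isBigO_one ℂ ((e4_lim.add_const 1).add ((p_lim.pow 2).const_mul 240))
  have h3 := b_as.mul (polyO (fun x => 2 * (x.2.1 ^ 4 + x.2.1 ^ 3 * (1 - 8 * x.2.2) + x.2.1 ^ 2 * (1 - 8 * x.2.2) ^ 2 +
    x.2.1 * (1 - 8 * x.2.2) ^ 3 + (1 - 8 * x.2.2) ^ 4) + 5 * x.1 * (x.2.1 ^ 3 + x.2.1 ^ 2 * (1 - 8 * x.2.2) +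
    x.2.1 * (1 - 8 * x.2.2) ^ 2 + (1 - 8 * x.2.2) ^ 3) + 5 * x.1 ^ 2 * (x.2.1 ^ 2 + x.2.1 * (1 - 8 * x.2.2) + (1 - 8 * x.2.2) ^ 2)) (by fun_prop))
  have h4 := a_as.mul (polyO (fun x => 5 * (1 - 8 * x.2.2) ^ 4 + 5 * (x.1 + 16 * x.2.2) * (1 - 8 * x.2.2) ^ 3) (by fun_prop))
  have h5 := (polyO (fun x => 480 + 240 ^ 2 * x.2.2 ^ 2 - 32 * (-20 * (8 * x.2.2) + 30 * (8 * x.2.2) ^ 2 - 12 * (8 * x.2.2) ^ 3)) (by fun_prop)).mul (isBigO_refl (fun z => p z ^ 2) I∞)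
  simp only [mul_one, one_mul] at h1 h3 h4 h5
  refine ((h1.add h5).sub ((h3.add h4).const_mul_left (1 / 2))).congr_left (fun z => ?_)
  ring

lemma Phi_O (c : ℂ) {g : ℂ → ℝ} (hg : (fun z => (e4 z ^ 2 - c * (b z ^ 3 * (2 * b z ^ 2 + 5 * a z * b z + 5 * a z ^ 2) / 2)) / dl z) =O[I∞] g)
    (h1 : (fun _ => (1 : ℝ)) =O[I∞] g) :
    (fun z => Phi Pa z + c * kp * Phi Pb z) =O[I∞] (fun z => (1 + ‖z‖ ^ 2) * g z) := by
  have hz1 : (fun _ : ℂ => (1 : ℂ)) =O[I∞] (fun z : ℂ => (1 + ‖z‖ ^ 2)) := by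
    refine IsBigO.of_bound 1 (Eventually.of_forall (fun z => ?_))
    rw [Real.norm_of_nonneg (by positivity), norm_one]; nlinarith [sq_nonneg ‖z‖]
  have hz2 : (fun z : ℂ => z) =O[I∞] (fun z : ℂ => (1 + ‖z‖ ^ 2)) := by
    refine IsBigO.of_bound 1 (Eventually.of_forall (fun z => ?_))
    rw [Real.norm_of_nonneg (by positivity)]; nlinarith [sq_nonneg (‖z‖ - 1)]
  have hz3 : (fun z : ℂ => z ^ 2) =O[I∞] (fun z : ℂ => (1 + ‖z‖ ^ 2)) := by
    refine IsBigO.of_bound 1 (Eventually.of_forall (fun z => ?_))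
    rw [Real.norm_of_nonneg (by positivity), norm_pow]; linarith
  have hPa : Pa =O[I∞] g := (Pa_O.trans ((show Tendsto (fun z => p z ^ 2) I∞ (𝓝 0) by simpa using p_lim.pow 2).isBigO_one ℝ)).trans h1
  have hu : (fun z => e4 z * (u z / dl z)) =O[I∞] g := ((e4_lim.mul ud_lim).isBigO_one ℝ).trans h1
  have hk := (hz1.mul hg).const_mul_left kp
  refine (((hz3.mul hPa).sub ((hz2.mul hu).const_mul_left (12 * I / Real.pi))).sub hk).congr' ?_ (EventuallyEq.rfl)
  filter_upwards [Hev] with z hz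
  rw [Phi, Phi, Pa_S z hz, Pb_S z hz]
  have hd := dl_ne z hz
  field_simp
  ring

lemma Phi_h_O : (fun z => Phi Pa z + 1 * kp * Phi Pb z) =O[I∞] (fun z => (1 + ‖z‖ ^ 2) * Real.exp (0 * z.im)) := by
  refine Phi_O 1 ?_ (by simpa using isBigO_refl (fun _ : ℂ => (1 : ℝ)) _)
  simp only [zero_mul, Real.exp_zero]
  have h := (diffO.mul (isBigO_refl (fun z => (dl z)⁻¹) I∞)).trans (pdl_lim.isBigO_one ℝ)
  refine h.congr_left (fun z => ?_)
  rw [one_mul]; rfl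

lemma Phi_f_O : (fun z => Phi Pa z + -1 * kp * Phi Pb z) =O[I∞] (fun z => (1 + ‖z‖ ^ 2) * Real.exp (2 * Real.pi * z.im)) := by
  have hp (z : ℂ) : Real.exp (2 * Real.pi * z.im) = ‖(p z ^ 2)⁻¹‖ := by
    rw [norm_inv, norm_pow, p_norm, ← Real.exp_nat_mul, ← Real.exp_neg]; congr 1; push_cast; ring
  refine Phi_O (-1) ?_ ?_
  · have h1 : (fun z => e4 z ^ 2 - -1 * (b z ^ 3 * (2 * b z ^ 2 + 5 * a z * b z + 5 * a z ^ 2) / 2)) =O[I∞] (fun _ => (1 : ℂ)) := by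
      have h := ((e4_lim.pow 2).isBigO_one ℂ).sub ((polyO (fun x => (x.2.1 ^ 3 * (2 * x.2.1 ^ 2 + 5 * x.1 * x.2.1 + 5 * x.1 ^ 2) / 2)) (by fun_prop)).const_mul_left (-1))
      exact h
    simp only [hp]
    refine IsBigO.norm_right ?_
    refine ((h1.mul (pdl_lim.isBigO_one ℂ)).mul (isBigO_refl (fun z => (p z ^ 2)⁻¹) I∞)).congr (fun z => ?_) (fun z => by simp)
    have := p_ne z
    field_simp
  · refine IsBigO.of_bound 1 ?_
    filter_upwards [Hev] with z hz
    have := Real.pi_pos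
    rw [Real.norm_of_nonneg (Real.exp_pos _).le, norm_one, one_mul, Real.one_le_exp_iff]
    positivity

lemma Pa_I {t : ℝ} (ht : 0 < t) : Pa (t * I) = (U t ^ 2 / dR t : ℝ) := by
  rw [Pa, U_c ht, dl_ab _ (imI ht), A_c ht, B_c ht, dR]; push_cast; rfl
lemma Pb_I {t : ℝ} (ht : 0 < t) : Pb (t * I) = (-(G t / (2 * dR t)) : ℝ) := by
  rw [Pb, dl_ab _ (imI ht), A_c ht, B_c ht, dR, G, g]; push_cast; ring
lemma Phi_I {P : ℂ → ℂ} {t : ℝ} (ht : 0 < t) : Phi P (vl 0 t) = - t ^ 2 * P ((1 / t : ℝ) * I) := by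
  rw [Phi, vl, ofReal_zero, zero_add, inv_I ht, mul_pow, I_sq]; ring

lemma Phi_h_pos {t : ℝ} (ht : 0 < t) : ∃ r : ℝ, 0 ≤ r ∧ Phi Pa (vl 0 t) + 1 * kp * Phi Pb (vl 0 t) = r := by
  have hs : 0 < 1 / t := by positivity
  have hk := key_ineq hs
  have hd := dR_pos hs
  have hpi := Real.pi_ne_zero
  refine ⟨t ^ 2 * ((18 / Real.pi ^ 2 * G (1 / t) - U (1 / t) ^ 2) / dR (1 / t)), by
    have : 0 ≤ 18 / Real.pi ^ 2 * G (1 / t) - U (1 / t) ^ 2 := by linarith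
    positivity, ?_⟩
  rw [Phi_I ht, Phi_I ht, Pa_I hs, Pb_I hs, kp]
  norm_cast
  field_simp
  ring
lemma Phi_f_neg {t : ℝ} (ht : 0 < t) : ∃ r : ℝ, 0 ≤ r ∧ -(Phi Pa (vl 0 t) + -1 * kp * Phi Pb (vl 0 t)) = r := by
  have hs : 0 < 1 / t := by positivity
  have hG := G_pos hs
  have hd := dR_pos hs
  have hpi := Real.pi_ne_zero
  refine ⟨t ^ 2 * ((18 / Real.pi ^ 2 * G (1 / t) + U (1 / t) ^ 2) / dR (1 / t)), by positivity, ?_⟩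
  rw [Phi_I ht, Phi_I ht, Pa_I hs, Pb_I hs, kp]
  rw [neg_one_mul]
  norm_cast
  field_simp
  ring

end SP8


namespace SP8
open Complex Filter Topology Asymptotics MeasureTheory

local notation "I∞" => Filter.comap Complex.im Filter.atTop

lemma strip_lim {r : ℝ} (hr : 0 < r) : ∀ η > 0, ∀ᶠ Y : ℝ in atTop, ∀ x : ℝ, |x| ≤ 1 →
    (1 + ‖vl x Y‖ ^ 2) * Real.exp (-r * Y) ≤ η := by
  intro η hη
  have h1 (k : ℕ) : Tendsto (fun Y : ℝ => Y ^ k * Real.exp (-r * Y)) atTop (𝓝 0) := by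
    have h := (Real.tendsto_pow_mul_exp_neg_atTop_nhds_zero k).comp (tendsto_id.const_mul_atTop hr)
    have h2 := h.const_mul (r ^ k)⁻¹
    rw [mul_zero] at h2
    refine h2.congr (fun Y => ?_)
    simp only [Function.comp, id]
    rw [mul_pow, neg_mul]
    have : r ^ k ≠ 0 := by positivity
    field_simp
  have h2 := ((h1 2).const_mul 5)
  rw [mul_zero] at h2
  filter_upwards [h2.eventually_le_const hη, eventually_ge_atTop 1] with Y hY hY1 x hx
  refine le_trans ?_ hY
  rw [← mul_assoc]
  refine mul_le_mul_of_nonneg_right ?_ (Real.exp_pos _).le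
  have h3 : ‖vl x Y‖ ^ 2 = x ^ 2 + Y ^ 2 := by
    rw [← normSq_eq_norm_sq, normSq_apply]; simp; ring
  have h4 : x ^ 2 ≤ 1 := by rw [← sq_abs]; nlinarith [abs_nonneg x]
  rw [h3]; nlinarith

lemma strip_lim' {F : ℂ → ℂ} {r : ℝ} (hr : 0 < r) (hF : F =O[I∞] (fun z => (1 + ‖z‖ ^ 2) * Real.exp (-r * z.im))) :
    ∀ η > 0, ∀ᶠ Y : ℝ in atTop, ∀ x : ℝ, |x| ≤ 1 → ‖F (vl x Y)‖ ≤ η := by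
  intro η hη
  obtain ⟨C, hC, h⟩ := hF.exists_pos
  have h1 := h.bound
  rw [eventually_comap] at h1
  filter_upwards [h1, strip_lim hr (η / C) (by positivity)] with Y h2 h3 x hx
  refine (h2 (vl x Y) (by simp)).trans ?_
  have := h3 x hx
  rw [Real.norm_of_nonneg (by positivity), vl_im]
  rwa [le_div_iff₀' hC] at this

lemma sgn {W F : ℂ → ℂ} {W0 J : ℂ} {s r : ℝ} (hr : r < Real.pi * s)
    (hW : ∀ z : ℂ, 0 < z.im → HasDerivAt W (F z * ee s z) z)
    (hW0 : Tendsto (fun t => W (vl 0 (1 / t))) atTop (𝓝 W0))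
    (hN : Tendsto (fun Y => ee s (-1) * W (vl 1 Y) + ee s 1 * W (vl (-1) Y) - 2 * W (vl 0 Y)) atTop
        (𝓝 (J + (ee s (-1) + ee s 1 - 2) * W0)))
    (hF : ∀ t : ℝ, 0 < t → ∃ r : ℝ, 0 ≤ r ∧ F (vl 0 t) = r)
    (hO : F =O[I∞] (fun z => (1 + ‖z‖ ^ 2) * Real.exp (r * z.im))) : 0 ≤ (I * J).re := by
  have hFe : (fun z => F z * ee s z) =O[I∞] (fun z => (1 + ‖z‖ ^ 2) * Real.exp (-(Real.pi * s - r) * z.im)) := by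
    refine (hO.mul (isBigO_refl (ee s) I∞).norm_right).congr_right (fun z => ?_)
    rw [ee_norm, mul_assoc, ← Real.exp_add]; congr 2; ring
  have hst := strip_lim' (by linarith) hFe
  have hlim : ∀ τ : ℝ, |τ| = 1 → Tendsto (fun Y => W (vl τ Y) - W (vl 0 Y)) atTop (𝓝 0) := by
    intro τ hτ
    rw [Metric.tendsto_nhds]
    intro η hη
    filter_upwards [hst (η / 2) (by positivity), eventually_gt_atTop 0] with Y h1 hY
    have := segm hW 0 τ hY (C := η / 2) (fun x hx => h1 x (by simpa [hτ] using hx))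
    rw [dist_zero_right]
    refine this.trans_lt ?_
    rw [sub_zero, hτ]; linarith
  have hc : ee s (-1) + ee s 1 - 2 = ((2 * Real.cos (Real.pi * s) - 2 : ℝ) : ℂ) := by
    push_cast
    rw [Complex.cos, ee, ee]; ring_nf
  have hJ : Tendsto (fun Y => (ee s (-1) + ee s 1 - 2) * (W (vl 0 Y) - W0)) atTop (𝓝 J) := by
    have h1 := (((hN.sub_const ((ee s (-1) + ee s 1 - 2) * W0)).sub ((hlim 1 (by simp)).const_mul (ee s (-1)))).sub ((hlim (-1) (by simp)).const_mul (ee s 1)))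
    simp only [mul_zero, sub_zero, add_sub_cancel_right] at h1
    refine h1.congr (fun Y => ?_)
    ring
  have hJ2 := (continuous_re.tendsto _).comp (hJ.const_mul I)
  refine ge_of_tendsto hJ2 ?_
  have hder : ∀ t : ℝ, 0 < t → ∃ q ≤ 0, HasDerivAt (fun t => (I * W (vl 0 t)).re) q t := by
    intro t ht
    obtain ⟨q, hq, hq2⟩ := hF t ht
    have h1 := HasDerivAt.comp t (hW (vl 0 t) (by simpa using ht)) (vl_der 0 t)
    have h2 := (reCLM.hasFDerivAt.comp_hasDerivAt t (h1.const_mul I))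
    refine ⟨-(q * Real.exp (-Real.pi * s * t)), by simp; positivity, h2.congr_deriv ?_⟩
    have h3 : ee s (vl 0 t) = (Real.exp (-Real.pi * s * t) : ℝ) := by
      rw [ee, ofReal_exp]; congr 1; simp only [vl]; push_cast
      linear_combination (Real.pi * s * t : ℂ) * I_sq
    rw [hq2, h3, reCLM_apply, show I * ((q : ℂ) * (Real.exp (-Real.pi * s * t) : ℝ) * I) = (I * I) * ((q * Real.exp (-Real.pi * s * t) : ℝ) : ℂ) by push_cast; ring, I_mul_I,
      neg_one_mul, neg_re, ofReal_re]
  have hanti : AntitoneOn (fun t => (I * W (vl 0 t)).re) (Set.Ioi 0) := by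
    refine antitoneOn_of_deriv_nonpos (convex_Ioi 0) (fun t ht => ?_) (fun t ht => ?_) (fun t ht => ?_)
    · obtain ⟨q, _, h⟩ := hder t ht
      exact h.continuousAt.continuousWithinAt
    · obtain ⟨q, _, h⟩ := hder t (interior_subset ht)
      exact h.differentiableAt.differentiableWithinAt
    · obtain ⟨q, h0, h⟩ := hder t (interior_subset ht)
      rwa [h.deriv]
  filter_upwards [eventually_gt_atTop 0] with Y hY
  have h1 : (I * W (vl 0 Y)).re ≤ (I * W0).re := by
    refine ge_of_tendsto ((continuous_re.tendsto _).comp (hW0.const_mul I)) ?_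
    filter_upwards [eventually_ge_atTop (1 / Y)] with t ht
    have ht0 : 0 < t := lt_of_lt_of_le (by positivity) ht
    refine hanti (by simpa using ht0) hY ?_
    rw [div_le_iff₀ ht0]
    rwa [div_le_iff₀ hY, mul_comm] at ht
  simp only [Function.comp]
  rw [hc, ← mul_assoc, mul_comm I, mul_assoc, re_ofReal_mul, mul_sub, sub_re]
  have := Real.cos_le_one (Real.pi * s)
  nlinarith

lemma strip_of {F : ℂ → ℂ} (hF : Tendsto F I∞ (𝓝 0)) :
    ∀ η > 0, ∀ᶠ Y : ℝ in atTop, ∀ x : ℝ, |x| ≤ 1 → ‖F (vl x Y)‖ ≤ η := by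
  intro η hη
  have h1 := (Metric.tendsto_nhds.1 hF) η hη
  rw [eventually_comap] at h1
  filter_upwards [h1] with Y h2 x _
  have := h2 (vl x Y) (by simp)
  rw [dist_zero_right] at this
  exact this.le

lemma val0 {W F : ℂ → ℂ} {J c : ℂ}
    (hW : ∀ z : ℂ, 0 < z.im → HasDerivAt W (F z * ee 0 z) z)
    (hN : Tendsto (fun Y => W (vl 1 Y) + W (vl (-1) Y) - 2 * W (vl 0 Y)) atTop (𝓝 J))
    (hst : ∀ η > 0, ∀ᶠ Y : ℝ in atTop, ∀ x : ℝ, |x| ≤ 1 → ‖F (vl x Y + 1) - F (vl x Y) - c‖ ≤ η) : J = c := by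
  refine tendsto_nhds_unique hN ?_
  rw [Metric.tendsto_nhds]
  intro η hη
  filter_upwards [hst (η / 2) (by positivity), eventually_gt_atTop 0] with Y h1 hY
  have hV : ∀ z : ℂ, 0 < z.im → HasDerivAt (fun z => W (z + 1) - W z - c * z) (F (z + 1) - F z - c) z := by
    intro z hz
    have h2 := hW z hz
    have h3 := (hW (z + 1) (imadd hz)).comp_add_const z 1
    refine ((h3.sub h2).sub ((hasDerivAt_id z).const_mul c)).congr_deriv ?_
    simp [ee]
  have := segm hV (-1) 0 hY (C := η / 2) (fun x hx => h1 x (by simpa using hx))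
  rw [dist_eq_norm]
  have e1 : vl 0 Y + 1 = vl 1 Y := by simp [vl]; ring
  have e2 : vl (-1) Y + 1 = vl 0 Y := by simp [vl]
  have e3 : vl (-1) Y = vl 0 Y - 1 := by rw [← e2]; ring
  rw [e1, e2] at this
  refine lt_of_le_of_lt (le_of_eq_of_le ?_ this) (by norm_num; linarith)
  congr 1
  linear_combination (-c) * e3

noncomputable def hh (s : ℝ) : ℂ := I * (IP Pa 1 s + kp * IP Pb (-1) s)
noncomputable def ff (s : ℝ) : ℂ := I * (IP Pa 1 s - kp * IP Pb (-1) s)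

lemma comb (c : ℂ) {s : ℝ} (hs : 0 ≤ s) :
    ∃ (W : ℂ → ℂ) (W0 : ℂ), (∀ z : ℂ, 0 < z.im → HasDerivAt W ((Phi Pa z + c * kp * Phi Pb z) * ee s z) z) ∧
      Tendsto (fun t => W (vl 0 (1 / t))) atTop (𝓝 W0) ∧
      Tendsto (fun Y => ee s (-1) * W (vl 1 Y) + ee s 1 * W (vl (-1) Y) - 2 * W (vl 0 Y)) atTop
        (𝓝 (IP Pa 1 s + c * kp * IP Pb (-1) s + (ee s (-1) + ee s 1 - 2) * W0)) := by
  obtain ⟨W, W0, h1, h2, h3⟩ := contour Pa_diff Pa_hO Pa_dd hs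
  obtain ⟨V, V0, k1, k2, k3⟩ := contour Pb_diff Pb_hO Pb_dd hs
  refine ⟨fun z => W z + c * kp * V z, W0 + c * kp * V0, fun z hz => ?_, h2.add (k2.const_mul _), ?_⟩
  · refine ((h1 z hz).add ((k1 z hz).const_mul (c * kp))).congr_deriv ?_
    rw [Phi, Phi]; ring
  · have := h3.add (k3.const_mul (c * kp))
    convert this using 2 <;> ring

lemma hh_nonneg {s : ℝ} (hs : 0 < s) : 0 ≤ (hh s).re := by
  obtain ⟨W, W0, h1, h2, h3⟩ := comb 1 hs.le
  have := sgn (r := 0) (by have := Real.pi_pos; positivity) h1 h2 h3 (fun t ht => Phi_h_pos ht) Phi_h_O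
  rwa [one_mul] at this

lemma ff_nonpos {s : ℝ} (hs : 2 < s) : (ff s).re ≤ 0 := by
  obtain ⟨W, W0, h1, h2, h3⟩ := comb (-1) (by linarith : 0 ≤ s)
  have := sgn (W := fun z => - W z) (W0 := -W0) (J := -(IP Pa 1 s + -1 * kp * IP Pb (-1) s)) (r := 2 * Real.pi) (s := s)
    (by nlinarith [Real.pi_pos]) (fun z hz => (h1 z hz).neg.congr_deriv (by rw [← neg_mul])) h2.neg
    (by convert h3.neg using 2 <;> ring) (fun t ht => Phi_f_neg ht) Phi_f_O.neg_left
  rw [mul_neg, neg_re] at this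
  rw [ff, sub_eq_add_neg, ← neg_mul, ← neg_one_mul kp]
  linarith

lemma zO : (fun z : ℂ => 2 * z + 1) =O[I∞] (fun z : ℂ => (1 + ‖z‖ ^ 2)) := by
  refine IsBigO.of_bound 2 (Eventually.of_forall (fun z => ?_))
  rw [Real.norm_of_nonneg (by positivity)]
  refine (norm_add_le _ _).trans ?_
  rw [norm_mul, norm_one, Complex.norm_ofNat]
  nlinarith [sq_nonneg (‖z‖ - 1)]

lemma IPa0 : IP Pa 1 0 = -(8640 * I / Real.pi) := by
  obtain ⟨W, W0, h1, h2, h3⟩ := contour Pa_diff Pa_hO Pa_dd le_rfl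
  have h3' : Tendsto (fun Y => W (vl 1 Y) + W (vl (-1) Y) - 2 * W (vl 0 Y)) atTop (𝓝 (IP Pa 1 0)) := by
    have e (z : ℂ) : ee 0 z = 1 := by simp [ee]
    simp only [e, one_mul] at h3
    convert h3 using 2
    ring
  refine val0 (F := Phi Pa) h1 h3' ?_
  intro η hη
  have hud : Tendsto (fun z => -(12 * I / Real.pi * (e4 z * (u z / dl z))) + 8640 * I / Real.pi) I∞ (𝓝 0) := by
    have := ((e4_lim.mul ud_lim).const_mul (12 * I / Real.pi)).neg.add_const (8640 * I / Real.pi)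
    convert this using 2
    ring
  filter_upwards [strip_of hud (η / 2) (by positivity), strip_lim' Real.pi_pos (zO.mul Pa_hO) (η / 2) (by positivity),
    eventually_gt_atTop 0] with Y k1 k2 hY x hx
  have h := Pa_d (vl x Y) (by simpa using hY)
  have e : Phi Pa (vl x Y + 1) - Phi Pa (vl x Y) - -(8640 * I / Real.pi) = (2 * vl x Y + 1) * Pa (vl x Y) +
      (-(12 * I / Real.pi * (e4 (vl x Y) * (u (vl x Y) / dl (vl x Y)))) + 8640 * I / Real.pi) := by
    rw [Phi, Phi]; linear_combination h
  rw [e]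
  refine (norm_add_le _ _).trans ?_
  linarith [k1 x hx, k2 x hx]

lemma IPb0 : IP Pb (-1) 0 = 0 := by
  obtain ⟨W, W0, h1, h2, h3⟩ := contour Pb_diff Pb_hO Pb_dd le_rfl
  have h3' : Tendsto (fun Y => W (vl 1 Y) + W (vl (-1) Y) - 2 * W (vl 0 Y)) atTop (𝓝 (IP Pb (-1) 0)) := by
    have e (z : ℂ) : ee 0 z = 1 := by simp [ee]
    simp only [e, one_mul] at h3
    convert h3 using 2
    ring
  refine val0 (F := Phi Pb) h1 h3' ?_
  intro η hη
  filter_upwards [strip_of (Pb_O.trans_tendsto p_lim) η hη, eventually_gt_atTop 0] with Y k1 hY x hx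
  have h := Pb_d (vl x Y) (by simpa using hY)
  rw [Phi, Phi, h, sub_zero, norm_neg]
  exact k1 x hx

lemma hh0 : hh 0 = (8640 / Real.pi : ℝ) := by
  rw [hh, IPa0, IPb0]; push_cast
  linear_combination (-8640 / Real.pi : ℂ) * I_sq
lemma ff0 : ff 0 = (8640 / Real.pi : ℝ) := by
  rw [ff, IPa0, IPb0]; push_cast
  linear_combination (-8640 / Real.pi : ℂ) * I_sq

end SP8


namespace SP8
open Complex Filter Topology Asymptotics MeasureTheory
open scoped FourierTransform

local notation "I∞" => Filter.comap Complex.im Filter.atTop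

abbrev VV := EuclideanSpace ℝ (Fin 8)

def FT (f g : VV → ℂ) : Prop := Integrable f ∧ ∀ w, ∫ v, 𝐞 (-inner ℝ v w) • f v = g w

lemma ch_cont (w : VV) : Continuous (fun v : VV => 𝐞 (-inner ℝ v w)) :=
  Real.continuous_fourierChar.comp (by fun_prop)

lemma ch_int {f : VV → ℂ} (hf : Integrable f) (w : VV) : Integrable (fun v => 𝐞 (-inner ℝ v w) • f v) := by
  refine hf.mono ((ch_cont w).aestronglyMeasurable.smul hf.aestronglyMeasurable) ?_
  filter_upwards with v using by simp

lemma FT.add {f g f' g' : VV → ℂ} (h : FT f g) (h' : FT f' g') : FT (fun x => f x + f' x) (fun x => g x + g' x) := by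
  refine ⟨h.1.add h'.1, fun w => ?_⟩
  beta_reduce
  rw [← h.2, ← h'.2, ← integral_add (ch_int h.1 w) (ch_int h'.1 w)]
  simp only [smul_add]
lemma FT.mul {f g : VV → ℂ} (c : ℂ) (h : FT f g) : FT (fun x => c * f x) (fun x => c * g x) := by
  refine ⟨h.1.const_mul c, fun w => ?_⟩
  beta_reduce
  rw [← h.2, ← integral_const_mul]
  simp only [mul_smul_comm]
lemma FT.congr {f g f' g' : VV → ℂ} (h : FT f g) (h1 : ∀ x, f x = f' x) (h2 : ∀ x, g x = g' x) : FT f' g' := by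
  rwa [← funext h1, ← funext h2]

lemma FT.cont {f g : VV → ℂ} (h : FT f g) : Continuous g := by
  have := VectorFourier.fourierIntegral_continuous (L := innerₗ VV) (μ := volume) Real.continuous_fourierChar (by exact continuous_inner) h.1
  refine this.congr (fun w => ?_)
  rw [← h.2]; rfl

lemma ee_b (s : ℝ) (z : ℂ) : ee s z = cexp (-(-(Real.pi * I * z)) * s) := by
  rw [ee]; congr 1; ring

lemma reb {z : ℂ} (hz : 0 < z.im) : 0 < (-(Real.pi * I * z)).re := by
  have := mul_pos Real.pi_pos hz
  simpa using this

lemma gft {z : ℂ} (hz : 0 < z.im) (w : VV) :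
    ∫ v : VV, 𝐞 (-inner ℝ v w) • ee (‖v‖ ^ 2) z = (z ^ 4)⁻¹ * ee (‖w‖ ^ 2) (-1 / z) := by
  have h := fourier_gaussian_innerProductSpace (reb hz) w
  rw [Real.fourier_eq] at h
  have hz0 := ne0 hz
  have hp := pi0
  have hI := I_ne_zero
  have e : (fun v : VV => 𝐞 (-inner ℝ v w) • ee (‖v‖ ^ 2) z) = (fun v : VV => 𝐞 (-inner ℝ v w) • cexp (-(-(Real.pi * I * z)) * ‖v‖ ^ 2)) := by
    ext v; rw [ee_b]; push_cast; rfl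
  rw [e, h]
  have e1 : (Real.pi / -(Real.pi * I * z)) ^ ((Module.finrank ℝ VV : ℂ) / 2) = (z ^ 4)⁻¹ := by
    rw [finrank_euclideanSpace, Fintype.card_fin, show ((8 : ℕ) : ℂ) / 2 = ((4 : ℕ) : ℂ) by norm_num, cpow_natCast,
      show (Real.pi / -(Real.pi * I * z)) = I * z⁻¹ by field_simp; rw [I_sq]]
    rw [mul_pow, I_pow_four, one_mul, inv_pow]
  have e2 : -Real.pi ^ 2 * ‖w‖ ^ 2 / -(Real.pi * I * z) = Real.pi * I * ((‖w‖ ^ 2 : ℝ) : ℂ) * (-1 / z) := by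
    push_cast
    field_simp
    rw [I_sq]; ring
  rw [ee, ← e1, ← e2]

lemma gint {z : ℂ} (hz : 0 < z.im) : Integrable (fun v : VV => ee (‖v‖ ^ 2) z) := by
  refine (GaussianFourier.integrable_cexp_neg_mul_sq_norm_add (reb hz) 0 (0 : VV)).congr ?_
  filter_upwards with v
  rw [ee_b]; push_cast; simp

lemma gnorm {z : ℂ} (hz : 0 < z.im) : ∫ v : VV, ‖ee (‖v‖ ^ 2) z‖ = (z.im ^ 4)⁻¹ := by
  have h := GaussianFourier.integral_rexp_neg_mul_sq_norm (V := VV) (mul_pos Real.pi_pos hz)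
  rw [finrank_euclideanSpace, Fintype.card_fin, show ((8 : ℕ) : ℝ) / 2 = ((4 : ℕ) : ℝ) by norm_num, Real.rpow_natCast] at h
  have := Real.pi_ne_zero
  convert h using 2
  · ext v; rw [ee_norm]; congr 1; ring
  · field_simp

lemma ee_cont : Continuous (fun x : ℝ × ℂ => ee x.1 x.2) := by unfold ee; fun_prop

lemma FT_K_aux {c ζ : ℝ → ℂ} {S : Set ℝ} (μ : Measure ℝ) [SFinite μ] (hcm : AEStronglyMeasurable c μ) (hζm : AEStronglyMeasurable ζ μ)
    (hmem : ∀ᵐ t ∂μ, t ∈ S) (him : ∀ t ∈ S, 0 < (ζ t).im) (hi : Integrable (fun t => ‖c t‖ * ((ζ t).im ^ 4)⁻¹) μ) :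
    FT (fun x => ∫ t, c t * ee (‖x‖ ^ 2) (ζ t) ∂μ)
      (fun x => ∫ t, c t * ((ζ t ^ 4)⁻¹ * ee (‖x‖ ^ 2) (-1 / ζ t)) ∂μ) := by
  have hm : AEStronglyMeasurable (fun x : VV × ℝ => c x.2 * ee (‖x.1‖ ^ 2) (ζ x.2)) (volume.prod μ) := by
    have h3 : AEStronglyMeasurable (fun x : VV × ℝ => c x.2) (volume.prod μ) := hcm.comp_snd
    refine h3.mul ?_
    have h0 : AEStronglyMeasurable (fun x : VV × ℝ => ‖x.1‖ ^ 2) (volume.prod μ) :=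
      (by fun_prop : Continuous (fun x : VV × ℝ => ‖x.1‖ ^ 2)).aestronglyMeasurable
    have h1 : AEStronglyMeasurable (fun x : VV × ℝ => ζ x.2) (volume.prod μ) := hζm.comp_snd
    have h2 : AEStronglyMeasurable (fun x : VV × ℝ => (‖x.1‖ ^ 2, ζ x.2)) (volume.prod μ) := h0.prodMk h1
    have h4 := ee_cont.comp_aestronglyMeasurable h2
    simp only at h4
    exact h4
  have hI : Integrable (fun x : VV × ℝ => c x.2 * ee (‖x.1‖ ^ 2) (ζ x.2)) (volume.prod μ) := by
    rw [integrable_prod_iff' hm]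
    constructor
    · filter_upwards [hmem] with t ht
      exact (gint (him t ht)).const_mul _
    · refine Integrable.congr hi ?_
      filter_upwards [hmem] with t ht
      simp only [norm_mul]
      rw [integral_const_mul, gnorm (him t ht)]
  refine ⟨hI.integral_prod_left, fun w => ?_⟩
  have h1 : ∀ v : VV, 𝐞 (-inner ℝ v w) • ∫ t, c t * ee (‖v‖ ^ 2) (ζ t) ∂μ =
      ∫ t, 𝐞 (-inner ℝ v w) • (c t * ee (‖v‖ ^ 2) (ζ t)) ∂μ := fun v => by
    simp only [Circle.smul_def]
    rw [integral_smul]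
  simp only [h1]
  rw [integral_integral_swap]
  · refine integral_congr_ae ?_
    filter_upwards [hmem] with t ht
    rw [← gft (him t ht), ← integral_const_mul]
    simp only [mul_smul_comm]
  · refine hI.mono ?_ ?_
    · exact (by exact Real.continuous_fourierChar.comp (by fun_prop) : Continuous (fun x : VV × ℝ => 𝐞 (-inner ℝ x.1 w))).aestronglyMeasurable.smul hm
    · filter_upwards with x using by simp [Function.uncurry]

lemma FT_K {c ζ : ℝ → ℂ} {t0 : ℝ} (hc : ContinuousOn c (Set.Ioi t0)) (hζ : ContinuousOn ζ (Set.Ioi t0))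
    (him : ∀ t ∈ Set.Ioi t0, 0 < (ζ t).im) (hi : IntegrableOn (fun t => ‖c t‖ * ((ζ t).im ^ 4)⁻¹) (Set.Ioi t0)) :
    FT (fun x => ∫ t in Set.Ioi t0, c t * ee (‖x‖ ^ 2) (ζ t))
      (fun x => ∫ t in Set.Ioi t0, c t * ((ζ t ^ 4)⁻¹ * ee (‖x‖ ^ 2) (-1 / ζ t))) := by
  exact FT_K_aux (S := Set.Ioi t0) _ (hc.aestronglyMeasurable measurableSet_Ioi) (hζ.aestronglyMeasurable measurableSet_Ioi) (ae_restrict_mem measurableSet_Ioi) him hi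

section
variable {P : ℂ → ℂ} (hd : ∀ z : ℂ, 0 < z.im → DifferentiableAt ℂ P z)
  (hO : P =O[I∞] (fun z => Real.exp (-Real.pi * z.im)))

include hd hO in
lemma FT_KP (σ : ℝ) {t0 : ℝ} (h0 : 0 < t0) : FT (fun x => KP P σ t0 (‖x‖ ^ 2))
    (fun x => ∫ t in Set.Ioi t0, P (vl σ t) / (vl σ t) ^ 4 * I * (((2 * σ + -1 / (vl σ t)) ^ 4)⁻¹ * ee (‖x‖ ^ 2) (-1 / (2 * σ + -1 / (vl σ t))))) := by
  have hne : ∀ t ∈ Set.Ici t0, vl σ t ≠ 0 := fun t ht => ne0 (by simpa using h0.trans_le ht)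
  have hv := (vl_cont σ).continuousOn (s := Set.Ici t0)
  have hc : ContinuousOn (fun t => P (vl σ t) / (vl σ t) ^ 4 * I) (Set.Ici t0) :=
    ((P_cont hd σ h0).div (hv.pow 4) (fun t ht => pow_ne_zero 4 (hne t ht))).mul continuousOn_const
  have hζ : ContinuousOn (fun t => 2 * (σ : ℂ) + -1 / (vl σ t)) (Set.Ici t0) :=
    continuousOn_const.add (continuousOn_const.div hv hne)
  have him : ∀ t ∈ Set.Ici t0, 0 < (2 * (σ : ℂ) + -1 / (vl σ t)).im := fun t ht => by
    have := im_inv_pos (z := vl σ t) (by simpa using h0.trans_le ht)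
    simpa using this
  refine (FT_K (hc.mono Set.Ioi_subset_Ici_self) (hζ.mono Set.Ioi_subset_Ici_self)
    (fun t ht => him t (Set.Ioi_subset_Ici_self ht)) ?_).congr (fun x => ?_) (fun x => rfl)
  · have hg : IntegrableOn (fun t => ((‖P (vl σ t) / (vl σ t) ^ 4 * I‖ * ((2 * (σ : ℂ) + -1 / (vl σ t)).im ^ 4)⁻¹ : ℝ) : ℂ)) (Set.Ioi t0) := by
      refine intIoi Real.pi_pos ?_ ?_
      · refine continuous_ofReal.comp_continuousOn (hc.norm.mul (((continuous_im.comp_continuousOn hζ).pow 4).inv₀ (fun t ht => pow_ne_zero 4 (him t ht).ne')))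
      · refine IsBigO.trans (IsBigO.of_bound ((1 + |σ|) ^ 4) ?_) (P_O hO σ)
        filter_upwards [eventually_ge_atTop 1, eventually_ge_atTop t0] with t ht ht0
        have ht' : 0 < t := by linarith
        have e1 : (2 * (σ : ℂ) + -1 / (vl σ t)).im = t / ‖vl σ t‖ ^ 2 := by
          rw [← normSq_eq_norm_sq, neg_div, one_div]; simp [neg_div]
        have h1 : 0 < ‖vl σ t‖ := norm_pos_iff.2 (hne t ht0)
        have h2 : ‖vl σ t‖ ≤ (1 + |σ|) * t := by
          have : ‖vl σ t‖ ≤ |σ| + |t| := by simpa using norm_le_abs_re_add_abs_im (vl σ t)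
          rw [abs_of_pos ht'] at this
          nlinarith [abs_nonneg σ]
        rw [norm_real, Real.norm_of_nonneg (by positivity), e1, norm_mul, norm_div, norm_I, mul_one, norm_pow]
        have h3 : ‖P (vl σ t)‖ / ‖vl σ t‖ ^ 4 * ((t / ‖vl σ t‖ ^ 2) ^ 4)⁻¹ = (‖vl σ t‖ / t) ^ 4 * ‖P (vl σ t)‖ := by
          field_simp
        rw [h3]
        refine mul_le_mul_of_nonneg_right ?_ (norm_nonneg _)
        refine pow_le_pow_left₀ (by positivity) ?_ 4
        rwa [div_le_iff₀ ht']
    have := hg.re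
    exact this.congr (by filter_upwards with t; exact ofReal_re _)
  · rw [KP]; congr 1; ext t; ring

include hd hO in
lemma FT_MP : FT (fun x => MP P (‖x‖ ^ 2)) (fun x => KP P 0 1 (‖x‖ ^ 2)) := by
  have hc : ContinuousOn (fun t => P (vl 0 t) * I) (Set.Ici 1) := (P_cont hd 0 one_pos).mul continuousOn_const
  refine (FT_K (hc.mono Set.Ioi_subset_Ici_self) ((vl_cont 0).continuousOn) (fun t ht => by simpa using one_pos.trans ht) ?_).congr (fun x => ?_) (fun x => ?_)
  · have hg : IntegrableOn (fun t => ((‖P (vl 0 t) * I‖ * ((vl 0 t).im ^ 4)⁻¹ : ℝ) : ℂ)) (Set.Ioi 1) := by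
      refine intIoi Real.pi_pos ?_ ?_
      · refine continuous_ofReal.comp_continuousOn (hc.norm.mul (((continuous_im.comp (vl_cont 0)).continuousOn.pow 4).inv₀ (fun t ht => pow_ne_zero 4 ?_)))
        simpa using (one_pos.trans_le ht).ne'
      · refine IsBigO.trans (IsBigO.of_bound 1 ?_) (P_O hO 0)
        filter_upwards [eventually_ge_atTop 1] with t ht
        rw [norm_real, Real.norm_of_nonneg (by positivity), norm_mul, norm_I, mul_one, one_mul, vl_im]
        exact mul_le_of_le_one_right (norm_nonneg _) (inv_le_one_of_one_le₀ (one_le_pow₀ ht))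
    have := hg.re
    exact this.congr (by filter_upwards with t; exact ofReal_re _)
  · rw [MP]; congr 1; ext t; ring
  · rw [KP]; congr 1; ext t
    rw [show 2 * ((0 : ℝ) : ℂ) + -1 / vl 0 t = -1 / vl 0 t by simp]
    ring

include hd hO in
lemma FT_K0 : FT (fun x => KP P 0 1 (‖x‖ ^ 2)) (fun x => MP P (‖x‖ ^ 2)) := by
  refine (FT_KP hd hO 0 one_pos).congr (fun x => rfl) (fun x => ?_)
  rw [MP]
  refine setIntegral_congr_fun measurableSet_Ioi (fun t ht => ?_)
  have := ne0 (z := vl 0 t) (by simpa using one_pos.trans ht)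
  rw [show 2 * ((0 : ℝ) : ℂ) + -1 / vl 0 t = -1 / vl 0 t by simp, show -1 / (-1 / vl 0 t) = vl 0 t by field_simp]
  field_simp

include hd hO in
lemma FT_K12 {ε : ℂ} (hε : ε ^ 2 = 1) (hT : ∀ z : ℂ, 0 < z.im → P (z + 1) = ε * P z) :
    FT (fun x => KP P (-1 / 2) (1 / 2) (‖x‖ ^ 2)) (fun x => ε * KP P (1 / 2) (1 / 2) (‖x‖ ^ 2)) := by
  refine (FT_KP hd hO _ (by norm_num)).congr (fun x => rfl) (fun x => ?_)
  rw [KP, ← integral_const_mul]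
  refine setIntegral_congr_fun measurableSet_Ioi (fun t ht => ?_)
  have ht0 : 0 < t := lt_trans (by norm_num) ht
  have h1 : vl (1 / 2) t = vl (-1 / 2) t + 1 := by simp [vl]; ring
  have n1 := ne0 (z := vl (-1 / 2) t) (by simpa using ht0)
  have n2 := ne0 (z := vl (-1 / 2) t + 1) (by simpa using ht0)
  beta_reduce
  rw [h1, hT _ (by simpa using ht0)]
  rw [show 2 * ((-1 / 2 : ℝ) : ℂ) = -1 by push_cast; ring, show 2 * ((1 / 2 : ℝ) : ℂ) = 1 by push_cast; ring]
  generalize vl (-1 / 2) t = v at *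
  have e1 : -1 + -1 / v = - (v + 1) / v := by
    field_simp; ring
  have e2 : -1 / (- (v + 1) / v) = 1 + -1 / (v + 1) := by
    field_simp; ring
  rw [e1, e2]
  have e3 : ((-(v + 1) / v) ^ 4)⁻¹ = v ^ 4 / (v + 1) ^ 4 := by
    rw [div_pow, inv_div, neg_pow]; norm_num
  rw [e3]
  generalize ee (‖x‖ ^ 2) (1 + -1 / (v + 1)) = k
  field_simp
  linear_combination (-(P v * k)) * hε

include hd hO in
lemma FT_K21 {ε : ℂ} (hε : ε ^ 2 = 1) (hT : ∀ z : ℂ, 0 < z.im → P (z + 1) = ε * P z) :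
    FT (fun x => KP P (1 / 2) (1 / 2) (‖x‖ ^ 2)) (fun x => ε * KP P (-1 / 2) (1 / 2) (‖x‖ ^ 2)) := by
  refine (FT_KP hd hO _ (by norm_num)).congr (fun x => rfl) (fun x => ?_)
  rw [KP, ← integral_const_mul]
  refine setIntegral_congr_fun measurableSet_Ioi (fun t ht => ?_)
  have ht0 : 0 < t := lt_trans (by norm_num) ht
  have h1 : vl (1 / 2) t = vl (-1 / 2) t + 1 := by simp [vl]; ring
  have n1 := ne0 (z := vl (-1 / 2) t) (by simpa using ht0)
  have n2 := ne0 (z := vl (-1 / 2) t + 1) (by simpa using ht0)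
  beta_reduce
  rw [h1, hT _ (by simpa using ht0)]
  rw [show 2 * ((-1 / 2 : ℝ) : ℂ) = -1 by push_cast; ring, show 2 * ((1 / 2 : ℝ) : ℂ) = 1 by push_cast; ring]
  generalize vl (-1 / 2) t = v at *
  have e1 : 1 + -1 / (v + 1) = v / (v + 1) := by
    field_simp; ring
  have e2 : -1 / (v / (v + 1)) = -1 + -1 / v := by
    field_simp; ring
  rw [e1, e2]
  generalize ee (‖x‖ ^ 2) (-1 + -1 / v) = k
  field_simp

include hd hO in
lemma FT_IP {ε : ℂ} (hε : ε ^ 2 = 1) (hT : ∀ z : ℂ, 0 < z.im → P (z + 1) = ε * P z) :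
    FT (fun x => IP P ε (‖x‖ ^ 2)) (fun x => ε * IP P ε (‖x‖ ^ 2)) := by
  refine (((((FT_K0 hd hO).mul 2).add ((FT_K12 hd hO hε hT).mul (-1))).add ((FT_K21 hd hO hε hT).mul (-1))).add
    ((FT_MP hd hO).mul (2 * ε))).congr (fun x => ?_) (fun x => ?_)
  · rw [IP]; ring
  · rw [IP]; linear_combination (-2 * MP P (‖x‖ ^ 2)) * hε

end

lemma FT_hf : FT (fun x => hh (‖x‖ ^ 2)) (fun x => ff (‖x‖ ^ 2)) := by
  refine (((FT_IP Pa_diff Pa_hO (ε := 1) (by norm_num) (fun z hz => by rw [Pa_T z hz, one_mul])).mul I).add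
    ((FT_IP Pb_diff Pb_hO (ε := -1) (by norm_num) Pb_T).mul (I * kp))).congr (fun x => ?_) (fun x => ?_)
  · rw [hh]; ring
  · rw [ff]; ring
lemma FT_fh : FT (fun x => ff (‖x‖ ^ 2)) (fun x => hh (‖x‖ ^ 2)) := by
  refine (((FT_IP Pa_diff Pa_hO (ε := 1) (by norm_num) (fun z hz => by rw [Pa_T z hz, one_mul])).mul I).add
    ((FT_IP Pb_diff Pb_hO (ε := -1) (by norm_num) Pb_T).mul (-(I * kp)))).congr (fun x => ?_) (fun x => ?_)
  · rw [ff]; ring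
  · rw [hh]; ring

end SP8


namespace SP8
open Complex Filter Topology MeasureTheory
open scoped FourierTransform ComplexConjugate

noncomputable def ex (v x : VV) : ℂ := (𝐞 (-inner ℝ v x) : Circle)

lemma ex_cont : Continuous (fun p : VV × VV => ex p.1 p.2) := by
  unfold ex
  exact continuous_subtype_val.comp (Real.continuous_fourierChar.comp (by fun_prop))
lemma ex_cont2 {α : Type*} [TopologicalSpace α] {f g : α → VV} (hf : Continuous f) (hg : Continuous g) :
    Continuous (fun a => ex (f a) (g a)) := by
  have := ex_cont.comp (hf.prodMk hg)
  simpa only [Function.comp_def] using this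
lemma ex_norm (v x : VV) : ‖ex v x‖ = 1 := Circle.norm_coe _
lemma ex_sub (v x y : VV) : ex v (x - y) = ex v x * conj (ex v y) := by
  rw [ex, ex, ex, inner_sub_right, ← Circle.coe_inv_eq_conj, ← Circle.coe_mul, ← AddChar.map_neg_eq_inv, ← AddChar.map_add_eq_mul]
  congr 2; ring

noncomputable def mh (μ : Measure VV) (v : VV) : ℂ := ∫ x, ex v x ∂μ

lemma ex_int (μ : Measure VV) [IsFiniteMeasure μ] (v : VV) : Integrable (ex v) μ := by
  refine Integrable.of_bound (C := 1) ?_ ?_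
  · exact (ex_cont.comp (by fun_prop : Continuous (fun x : VV => (v, x)))).aestronglyMeasurable
  · filter_upwards with x using (ex_norm v x).le

lemma mh_bd (μ : Measure VV) [IsFiniteMeasure μ] (v : VV) : ‖mh μ v‖ ≤ μ.real Set.univ := by
  have := norm_integral_le_of_norm_le_const (μ := μ) (f := ex v) (C := 1) (by filter_upwards with x using (ex_norm v x).le)
  simpa [mh] using this
lemma mh_meas (μ : Measure VV) [IsFiniteMeasure μ] (ρ : Measure VV) : AEStronglyMeasurable (mh μ) ρ := by
  have : StronglyMeasurable (fun v => ∫ x, ex v x ∂μ) :=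
    StronglyMeasurable.integral_prod_right (f := fun v x => ex v x) (by exact ex_cont.stronglyMeasurable)
  exact this.aestronglyMeasurable

noncomputable def QQ (F : VV → ℂ) (μ ν : Measure VV) : ℂ := ∫ x, ∫ y, F (x - y) ∂ν ∂μ

section
variable {H F : VV → ℂ} (h : FT H F)

include h in
lemma F_bd (x : VV) : ‖F x‖ ≤ ∫ v, ‖H v‖ := by
  rw [← h.2]
  refine (norm_integral_le_integral_norm _).trans (le_of_eq ?_)
  simp

include h in
lemma F_int (μ : Measure VV) [IsFiniteMeasure μ] (x : VV) : Integrable (fun y => F (x - y)) μ := by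
  refine Integrable.of_bound (C := ∫ v, ‖H v‖) ?_ ?_
  · exact (h.cont.comp (by fun_prop)).aestronglyMeasurable
  · filter_upwards with y using F_bd h _

include h in
lemma F_int2 (μ ν : Measure VV) [IsFiniteMeasure μ] [IsFiniteMeasure ν] : Integrable (fun p : VV × VV => F (p.1 - p.2)) (μ.prod ν) := by
  refine Integrable.of_bound (C := ∫ v, ‖H v‖) ?_ ?_
  · exact (h.cont.comp (by fun_prop)).aestronglyMeasurable
  · filter_upwards with y using F_bd h _

include h in
lemma HQ_int (μ ν : Measure VV) [IsFiniteMeasure μ] [IsFiniteMeasure ν] :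
    Integrable (fun v => H v * (mh μ v * conj (mh ν v))) := by
  refine h.1.mul_bdd (c := μ.real Set.univ * ν.real Set.univ) ?_ ?_
  · exact (mh_meas μ _).mul (continuous_conj.comp_aestronglyMeasurable (mh_meas ν _))
  · filter_upwards with v
    rw [norm_mul, RCLike.norm_conj]
    exact mul_le_mul (mh_bd _ _) (mh_bd _ _) (norm_nonneg _) measureReal_nonneg

include h in
lemma QQ_eq (μ ν : Measure VV) [IsFiniteMeasure μ] [IsFiniteMeasure ν] :
    QQ F μ ν = ∫ v, H v * (mh μ v * conj (mh ν v)) := by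
  have h1 : QQ F μ ν = ∫ p, F (p.1 - p.2) ∂(μ.prod ν) := (integral_prod _ (F_int2 h μ ν)).symm
  have h2 : ∀ p : VV × VV, F (p.1 - p.2) = ∫ v, H v * (ex v p.1 * conj (ex v p.2)) := fun p => by
    rw [← h.2]
    refine integral_congr_ae (Eventually.of_forall fun v => ?_)
    beta_reduce
    rw [← ex_sub, Circle.smul_def, smul_eq_mul, mul_comm]; rfl
  rw [h1]
  simp only [h2]
  rw [integral_integral_swap]
  · refine integral_congr_ae (Eventually.of_forall fun v => ?_)
    beta_reduce
    rw [integral_const_mul, integral_prod_mul (ex v) (fun y => conj (ex v y)), integral_conj]; rfl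
  · have hH : Integrable (fun q : (VV × VV) × VV => H q.2) ((μ.prod ν).prod volume) := h.1.comp_snd _
    refine hH.mul_bdd (c := 1) ?_ ?_
    · have hc : Continuous (fun q : (VV × VV) × VV => ex q.2 q.1.1 * conj (ex q.2 q.1.2)) := by
        have f1 : Continuous (fun q : (VV × VV) × VV => q.1.1) := continuous_fst.comp continuous_fst
        have f2 : Continuous (fun q : (VV × VV) × VV => q.1.2) := continuous_snd.comp continuous_fst
        exact (ex_cont2 continuous_snd f1).mul (continuous_conj.comp (ex_cont2 continuous_snd f2))
      exact hc.aestronglyMeasurable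
    · filter_upwards with q
      rw [norm_mul, RCLike.norm_conj, ex_norm, ex_norm, one_mul]

include h in
lemma QQ_pd (hH : ∀ v, 0 ≤ (H v).re) (μ ν : Measure VV) [IsFiniteMeasure μ] [IsFiniteMeasure ν] :
    0 ≤ (QQ F μ μ - QQ F μ ν - QQ F ν μ + QQ F ν ν).re := by
  have i1 := HQ_int h μ μ
  have i2 := HQ_int h μ ν
  have i3 := HQ_int h ν μ
  have i4 := HQ_int h ν ν
  have i5 := i1.sub i2
  have i6 := i5.sub i3
  rw [QQ_eq h, QQ_eq h, QQ_eq h, QQ_eq h, ← integral_sub' i1 i2, ← integral_sub' i5 i3, ← integral_add' i6 i4]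
  have e := integral_re (i6.add i4)
  refine le_of_le_of_eq ?_ e
  refine integral_nonneg (fun v => ?_)
  have : H v * (mh μ v * conj (mh μ v)) - H v * (mh μ v * conj (mh ν v)) - H v * (mh ν v * conj (mh μ v)) + H v * (mh ν v * conj (mh ν v))
     = H v * (normSq (mh μ v - mh ν v) : ℝ) := by
    rw [← mul_conj, map_sub]; ring
  simp only [Pi.sub_apply, Pi.add_apply, Pi.zero_apply]
  rw [this]
  simpa using mul_nonneg (hH v) (normSq_nonneg _)

end
end SP8


namespace SP8
open Complex Filter Topology MeasureTheory

noncomputable def FF (x : VV) : ℂ := ff (‖x‖ ^ 2)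
noncomputable def HH (x : VV) : ℂ := hh (‖x‖ ^ 2)
noncomputable def kap : ℝ := 8640 / Real.pi
noncomputable def tau (T : ℝ) : ℝ := ∫ u : VV, {u : VV | T ≤ ‖u‖}.indicator (fun u => ‖FF u‖) u
noncomputable def MM : ℝ := ∫ u : VV, ‖FF u‖
noncomputable def bv (r : ℝ) : ℝ := (volume (Metric.ball (0 : VV) r)).toReal

lemma HF : FT HH FF := FT_hf
lemma FH : FT FF HH := FT_fh
lemma FFc : Continuous FF := HF.cont
lemma kap_pos : 0 < kap := div_pos (by norm_num) Real.pi_pos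
lemma FF0 : FF 0 = kap := by rw [FF, kap, ← ff0]; simp
lemma HH_nn (v : VV) : 0 ≤ (HH v).re := by
  rcases eq_or_ne v 0 with rfl | hv
  · rw [HH, norm_zero, zero_pow two_ne_zero, hh0, ofReal_re]; exact kap_pos.le
  · exact hh_nonneg (by positivity)
lemma FF_int : ∫ x, FF x = kap := by
  have := FH.2 0
  simp only [inner_zero_right, neg_zero, AddChar.map_zero_eq_one, one_smul] at this
  rw [this, HH, kap, ← hh0]; simp
lemma FF_np {x : VV} (hx : 2 ≤ ‖x‖ ^ 2) : (FF x).re ≤ 0 := by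
  have h1 : Tendsto (fun c : ℝ => (FF (c • x)).re) (𝓝[>] 1) (𝓝 (FF ((1 : ℝ) • x)).re) := by
    have : Continuous (fun c : ℝ => (FF (c • x)).re) := continuous_re.comp (FFc.comp (by fun_prop))
    exact (this.tendsto 1).mono_left nhdsWithin_le_nhds
  rw [one_smul] at h1
  refine le_of_tendsto h1 ?_
  filter_upwards [self_mem_nhdsWithin] with c hc
  have hc : 1 < c := hc
  refine ff_nonpos ?_
  rw [norm_smul, mul_pow, Real.norm_eq_abs, sq_abs]
  nlinarith
lemma FF_ev (x y : VV) : FF (x - y) = FF (y - x) := by rw [FF, FF, norm_sub_rev]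
lemma FF_trans (y : VV) : Integrable (fun x => FF (y - x)) := FH.1.comp_sub_left y

lemma tau_nn (T : ℝ) : 0 ≤ tau T := integral_nonneg fun u => Set.indicator_nonneg (fun _ _ => norm_nonneg _) u
lemma MM_nn : 0 ≤ MM := integral_nonneg fun u => norm_nonneg _
lemma tau_meas (T : ℝ) : MeasurableSet {u : VV | T ≤ ‖u‖} := measurableSet_le measurable_const measurable_norm
lemma tau_lim : Tendsto tau atTop (𝓝 0) := by
  have : Tendsto tau atTop (𝓝 (∫ u : VV, (0 : ℝ))) := by
    refine tendsto_integral_filter_of_dominated_convergence (fun u => ‖FF u‖) ?_ ?_ FH.1.norm ?_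
    · filter_upwards with T
      exact (FFc.norm.aestronglyMeasurable).indicator (tau_meas T)
    · filter_upwards with T
      filter_upwards with u
      refine (norm_indicator_le_norm_self _ _).trans ?_
      simp
    · filter_upwards with u
      refine tendsto_const_nhds.congr' ?_
      filter_upwards [eventually_gt_atTop ‖u‖] with T hT
      rw [Set.indicator_of_notMem]
      simpa using hT
  simpa using this

lemma inner_near {R T : ℝ} {y : VV} (hy : ‖y‖ ≤ R) :
    ‖(∫ x in Metric.ball (0 : VV) (R + T), FF (y - x)) - kap‖ ≤ tau T := by
  have h1 := integral_add_compl (μ := volume) (f := fun x => FF (y - x)) (Metric.isOpen_ball (x := (0 : VV)) (ε := R + T)).measurableSet (FF_trans y)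
  rw [integral_sub_left_eq_self FF volume y, FF_int] at h1
  rw [← h1, sub_add_cancel_left, norm_neg]
  refine (norm_integral_le_integral_norm _).trans ?_
  have h2 : tau T = ∫ x : VV, {u : VV | T ≤ ‖u‖}.indicator (fun u => ‖FF u‖) (y - x) := by
    rw [integral_sub_left_eq_self (fun x => {u : VV | T ≤ ‖u‖}.indicator (fun u => ‖FF u‖) x) volume y]; rfl
  rw [h2, ← integral_indicator Metric.isOpen_ball.measurableSet.compl]
  refine integral_mono ((FF_trans y).norm.indicator Metric.isOpen_ball.measurableSet.compl) ?_ ?_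
  · exact (FH.1.norm.indicator (tau_meas T)).comp_sub_left y
  · intro x
    beta_reduce
    by_cases hx : x ∈ (Metric.ball (0 : VV) (R + T))ᶜ
    · rw [Set.indicator_of_mem hx, Set.indicator_of_mem]
      have hx' : R + T ≤ ‖x‖ := by simpa using hx
      have := norm_sub_norm_le x y
      rw [norm_sub_rev] at this
      show T ≤ ‖y - x‖
      linarith
    · rw [Set.indicator_of_notMem hx]
      exact Set.indicator_nonneg (fun _ _ => norm_nonneg _) _

lemma inner_all (y : VV) (S : Set VV) : ‖∫ x in S, FF (y - x)‖ ≤ MM := by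
  refine (norm_integral_le_integral_norm _).trans ?_
  refine (setIntegral_le_integral (FF_trans y).norm (Eventually.of_forall fun _ => norm_nonneg _)).trans ?_
  rw [integral_sub_left_eq_self (fun x => ‖FF x‖) volume y]; rfl

lemma sum_dirac (S : Finset VV) (y : VV → VV) (f : VV → ℂ) : ∫ x, f x ∂(∑ i ∈ S, Measure.dirac (y i)) = ∑ i ∈ S, f (y i) := by
  rw [integral_finsetSum_measure (fun i _ => integrable_dirac (by simp))]
  simp only [integral_dirac]

lemma bv_fin (r : ℝ) : volume (Metric.ball (0 : VV) r) ≠ ⊤ := measure_ball_lt_top.ne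

lemma QQ_vv {R T : ℝ} (hT : 0 ≤ T) :
    (QQ FF (volume.restrict (Metric.ball (0 : VV) (R + T))) (volume.restrict (Metric.ball (0 : VV) (R + T)))).re
      ≤ bv (R + T) * (kap + tau T) + (bv (R + T) - bv R) * MM := by
  have hs : Metric.ball (0 : VV) R ⊆ Metric.ball (0 : VV) (R + T) := Metric.ball_subset_ball (by linarith)
  have hm := (Metric.isOpen_ball (x := (0 : VV)) (ε := R)).measurableSet
  set ν := volume.restrict (Metric.ball (0 : VV) (R + T)) with hν
  have : IsFiniteMeasure ν := ⟨by rw [hν]; simpa using measure_ball_lt_top⟩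
  have hi : Integrable (fun x => ∫ y, FF (x - y) ∂ν) ν := (F_int2 HF ν ν).integral_prod_left
  have e : (QQ FF ν ν).re = ∫ x, (∫ y, FF (x - y) ∂ν).re ∂ν := (integral_re hi).symm
  rw [e]
  have hg1 : Integrable (fun _ : VV => kap + tau T) ν := integrable_const _
  have hg2 : Integrable ((Metric.ball (0 : VV) R)ᶜ.indicator (fun _ : VV => MM)) ν := (integrable_const _).indicator hm.compl
  have h1 : ∫ x, (∫ y, FF (x - y) ∂ν).re ∂ν ≤ ∫ x, ((kap + tau T) + (Metric.ball (0 : VV) R)ᶜ.indicator (fun _ : VV => MM) x) ∂ν := by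
    refine integral_mono hi.re (hg1.add hg2) (fun x => ?_)
    by_cases hx : x ∈ (Metric.ball (0 : VV) R)ᶜ
    · beta_reduce
      rw [Set.indicator_of_mem hx]
      have := (re_le_norm _).trans (inner_all x (Metric.ball (0 : VV) (R + T)))
      have h2 := tau_nn T
      have h3 := kap_pos
      exact this.trans (by linarith)
    · beta_reduce
      rw [Set.indicator_of_notMem hx]
      have hx' : ‖x‖ < R := by simpa using hx
      have := (re_le_norm _).trans (inner_near (T := T) hx'.le)
      rw [sub_re, ofReal_re] at this
      have h4 : (∫ y, FF (x - y) ∂ν).re ≤ kap + tau T + 0 := by linarith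
      exact h4
  refine h1.trans (le_of_eq ?_)
  rw [integral_add hg1 hg2, integral_indicator_const _ hm.compl, integral_const]
  congr 1
  · simp [hν, bv, Measure.real]
  · rw [smul_eq_mul]
    congr 1
    rw [measureReal_restrict_apply hm.compl, Set.inter_comm, ← Set.sdiff_eq, measureReal_sdiff hs hm]
    · rfl

lemma LP {R T : ℝ} (hT : 0 ≤ T) (S : Finset VV) (y : VV → VV) (hy : ∀ a ∈ S, ∀ b ∈ S, a ≠ b → 2 ≤ ‖y a - y b‖ ^ 2)
    (hR : ∀ a ∈ S, ‖y a‖ ≤ R) :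
    (S.card : ℝ) * (kap - 2 * tau T) ≤ bv (R + T) * (kap + tau T) + (bv (R + T) - bv R) * MM := by
  have hv := QQ_vv (R := R) hT
  set ν := volume.restrict (Metric.ball (0 : VV) (R + T)) with hν
  have : IsFiniteMeasure ν := ⟨by rw [hν]; simpa using measure_ball_lt_top⟩
  have hp := QQ_pd HF HH_nn (∑ i ∈ S, Measure.dirac (y i)) ν
  have e1 : (QQ FF (∑ i ∈ S, Measure.dirac (y i)) (∑ i ∈ S, Measure.dirac (y i))).re ≤ S.card * kap := by
    rw [QQ, sum_dirac, re_sum]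
    simp only [sum_dirac, re_sum]
    rw [← nsmul_eq_mul]
    refine Finset.sum_le_card_nsmul _ _ _ (fun a ha => ?_)
    rw [← Finset.add_sum_erase _ _ ha, sub_self, FF0, ofReal_re]
    have : ∑ b ∈ S.erase a, (FF (y a - y b)).re ≤ 0 := Finset.sum_nonpos fun b hb =>
      FF_np (hy a ha b (Finset.mem_of_mem_erase hb) (Finset.ne_of_mem_erase hb).symm)
    linarith
  have e2 : QQ FF (∑ i ∈ S, Measure.dirac (y i)) ν = ∑ a ∈ S, ∫ x, FF (y a - x) ∂ν := by
    rw [QQ, sum_dirac]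
  have e3 : QQ FF ν (∑ i ∈ S, Measure.dirac (y i)) = ∑ a ∈ S, ∫ x, FF (y a - x) ∂ν := by
    rw [QQ]
    simp only [sum_dirac, FF_ev _ (y _)]
    exact integral_finsetSum _ (fun a _ => F_int HF ν (y a))
  have e4 : S.card * (kap - tau T) ≤ (∑ a ∈ S, ∫ x, FF (y a - x) ∂ν).re := by
    rw [re_sum, ← nsmul_eq_mul]
    refine Finset.card_nsmul_le_sum _ _ _ (fun a ha => ?_)
    have := (abs_re_le_norm _).trans (inner_near (T := T) (hR a ha))
    rw [sub_re, ofReal_re] at this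
    have h5 := (abs_le.1 this).1
    have h6 : kap - tau T ≤ (∫ x in Metric.ball (0 : VV) (R + T), FF (y a - x)).re := by linarith
    exact h6
  rw [e2, e3, add_re, sub_re, sub_re] at hp
  linarith

end SP8


namespace SP8
open Complex Filter Topology MeasureTheory

noncomputable def CC : ℝ := Real.pi ^ 4 / 24
lemma CC_pos : 0 < CC := div_pos (pow_pos Real.pi_pos 4) (by norm_num)
lemma vball (x : VV) (r : ℝ) : volume (Metric.ball x r) = ENNReal.ofReal r ^ 8 * ENNReal.ofReal CC := by
  rw [InnerProductSpace.volume_ball_of_dim_even (k := 4) (by simp), finrank_euclideanSpace, Fintype.card_fin, CC]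
  norm_num [Nat.factorial]
lemma bv_eq {r : ℝ} (hr : 0 ≤ r) : bv r = CC * r ^ 8 := by
  rw [bv, vball, ENNReal.toReal_mul, ENNReal.toReal_pow, ENNReal.toReal_ofReal hr, ENNReal.toReal_ofReal CC_pos.le, mul_comm]

noncomputable def cc : ℝ := (√2)⁻¹
lemma cc_pos : 0 < cc := by unfold cc; positivity
lemma cc_sq : cc ^ 2 = 1 / 2 := by rw [cc, inv_pow, Real.sq_sqrt (by norm_num)]; norm_num

noncomputable def r0 (r : ℝ) : ℝ := cc * (1 + r⁻¹)
noncomputable def r1 (r : ℝ) : ℝ := cc * (1 + r⁻¹) + √r * r⁻¹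
noncomputable def gg (r : ℝ) : ℝ := CC * (r1 r ^ 8 * (kap + tau √r) + (r1 r ^ 8 - r0 r ^ 8) * MM) / (kap - 2 * tau √r)

lemma gg_lim : Tendsto gg atTop (𝓝 (Real.pi ^ 4 / 384)) := by
  have hr0 : Tendsto r0 atTop (𝓝 cc) := by
    have : Tendsto r0 atTop (𝓝 (cc * (1 + 0))) := tendsto_const_nhds.mul (tendsto_const_nhds.add tendsto_inv_atTop_zero)
    simpa using this
  have hr1 : Tendsto r1 atTop (𝓝 cc) := by
    have h2 : Tendsto (fun r : ℝ => √r * r⁻¹) atTop (𝓝 0) := by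
      refine (tendsto_inv_atTop_zero.comp Real.tendsto_sqrt_atTop).congr' ?_
      filter_upwards [eventually_gt_atTop 0] with r hr
      have := Real.sqrt_pos.2 hr
      simp only [Function.comp]
      rw [← div_eq_mul_inv, Real.sqrt_div_self]
    have h3 := hr0.add h2
    rw [add_zero] at h3
    exact h3
  have ht : Tendsto (fun r : ℝ => tau √r) atTop (𝓝 0) := tau_lim.comp Real.tendsto_sqrt_atTop
  have hk := kap_pos.ne'
  have : Tendsto gg atTop (𝓝 (CC * (cc ^ 8 * (kap + 0) + (cc ^ 8 - cc ^ 8) * MM) / (kap - 2 * 0))) := by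
    refine Tendsto.div ?_ (tendsto_const_nhds.sub (tendsto_const_nhds.mul ht)) (by simpa using hk)
    exact tendsto_const_nhds.mul (((hr1.pow 8).mul (tendsto_const_nhds.add ht)).add (((hr1.pow 8).sub (hr0.pow 8)).mul tendsto_const_nhds))
  convert this using 2
  rw [show cc ^ 8 = (cc ^ 2) ^ 4 by ring, cc_sq, CC, sub_self, zero_mul, mul_zero, sub_zero, add_zero, add_zero]
  field_simp
  norm_num

lemma card_bd {X : Set VV} (hX : X.Pairwise fun x y => 2 ≤ dist x y) {r : ℝ} (hr : 0 < r) (ht : 0 < kap - 2 * tau √r)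
    (S : Finset VV) (hS : (S : Set VV) ⊆ X ∩ Metric.ball 0 (r + 1)) : (S.card : ℝ) ≤ gg r * r ^ 8 := by
  have h := LP (R := cc * (r + 1)) (Real.sqrt_nonneg r) S (fun x => cc • x) (fun a ha b hb hab => by
      have h1 : 2 ≤ dist a b := hX (hS ha).1 (hS hb).1 hab
      rw [dist_eq_norm] at h1
      beta_reduce
      rw [← smul_sub, norm_smul, mul_pow, Real.norm_eq_abs, sq_abs, cc_sq]
      nlinarith) (fun a ha => by
      have h1 : ‖a‖ < r + 1 := by simpa using (hS ha).2
      beta_reduce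
      rw [norm_smul, Real.norm_of_nonneg cc_pos.le]
      exact mul_le_mul_of_nonneg_left h1.le cc_pos.le)
  have hc := cc_pos
  have hs := Real.sqrt_nonneg r
  rw [bv_eq (by positivity), bv_eq (by positivity)] at h
  have e0 : cc * (r + 1) = r0 r * r := by rw [r0]; field_simp
  have e1 : cc * (r + 1) + √r = r1 r * r := by rw [r1]; field_simp
  rw [e1, e0] at h
  rw [gg, div_mul_eq_mul_div, le_div_iff₀ ht]
  refine h.trans (le_of_eq ?_)
  ring

theorem final (X : Set VV) (hX : X.Pairwise fun x y => 2 ≤ dist x y) :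
    limsup (fun r : ℝ => (volume ((⋃ x ∈ X, Metric.ball x 1) ∩ Metric.ball 0 r)).toReal / (volume (Metric.ball (0 : VV) r)).toReal) atTop
      ≤ Real.pi ^ 4 / 384 := by
  rw [← gg_lim.limsup_eq]
  have ht : Tendsto (fun r : ℝ => kap - 2 * tau √r) atTop (𝓝 (kap - 2 * 0)) :=
    tendsto_const_nhds.sub (tendsto_const_nhds.mul (tau_lim.comp Real.tendsto_sqrt_atTop))
  refine limsup_le_limsup ?_ ?_ gg_lim.isBoundedUnder_le
  · filter_upwards [eventually_gt_atTop 0, ht.eventually (lt_mem_nhds (by simpa using kap_pos : (0 : ℝ) < kap - 2 * 0))] with r hr hr'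
    have hfin : (X ∩ Metric.ball 0 (r + 1)).Finite := by
      by_contra hinf
      obtain ⟨n, hn⟩ := exists_nat_gt (gg r * r ^ 8)
      obtain ⟨S, hS, hc⟩ := Set.Infinite.exists_subset_card_eq hinf n
      have := card_bd hX hr hr' S hS
      rw [hc] at this
      linarith
    have hb := card_bd hX hr hr' hfin.toFinset (by simp)
    have hsub : (⋃ x ∈ X, Metric.ball x 1) ∩ Metric.ball 0 r ⊆ ⋃ x ∈ hfin.toFinset, Metric.ball x 1 := by
      rintro z ⟨hz, hzr⟩
      obtain ⟨x, hx, hzx⟩ := Set.mem_iUnion₂.1 hz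
      refine Set.mem_iUnion₂.2 ⟨x, ?_, hzx⟩
      rw [Set.Finite.mem_toFinset]
      refine ⟨hx, ?_⟩
      have h1 : dist z x < 1 := hzx
      have h2 : dist z 0 < r := hzr
      have h3 := dist_triangle_left x 0 z
      show dist x 0 < r + 1
      linarith
    have hvol : volume ((⋃ x ∈ X, Metric.ball x 1) ∩ Metric.ball 0 r) ≤ hfin.toFinset.card * ENNReal.ofReal CC := by
      refine (measure_mono hsub).trans ((measure_biUnion_finset_le _ _).trans ?_)
      simp only [vball, ENNReal.ofReal_one, one_pow, one_mul, Finset.sum_const, nsmul_eq_mul]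
      exact le_rfl
    have hv2 : (volume ((⋃ x ∈ X, Metric.ball x 1) ∩ Metric.ball 0 r)).toReal ≤ hfin.toFinset.card * CC := by
      refine (ENNReal.toReal_mono (by finiteness) hvol).trans (le_of_eq ?_)
      rw [ENNReal.toReal_mul, ENNReal.toReal_natCast, ENNReal.toReal_ofReal CC_pos.le]
    have e : (volume (Metric.ball (0 : VV) r)).toReal = CC * r ^ 8 := bv_eq hr.le
    have hC := CC_pos
    rw [e, div_le_iff₀ (by positivity)]
    nlinarith
  · refine IsBoundedUnder.isCoboundedUnder_le ⟨0, ?_⟩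
    simp only [eventually_map]
    filter_upwards with r
    positivity

end SP8

open MeasureTheory Metric Filter

/-- **Theorem 1 (main theorem).** No packing of unit balls in Euclidean space `ℝ⁸` has density
greater than that of the `E₈`-lattice packing: for every set `X` of centers with pairwise
distances at least `2`, the density of the packing `⋃ x ∈ X, B(x,1)` is at most `π⁴/384`. -/
theorem sphere_packing_bound_dim8 (X : Set (EuclideanSpace ℝ (Fin 8)))
    (hX : X.Pairwise fun x y => 2 ≤ dist x y) :
    limsup (fun r : ℝ =>
        (volume ((⋃ x ∈ X, ball x 1) ∩ ball (0 : EuclideanSpace ℝ (Fin 8)) r)).toReal /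
          (volume (ball (0 : EuclideanSpace ℝ (Fin 8)) r)).toReal) atTop
      ≤ Real.pi ^ 4 / 384 := by
  exact SP8.final X hX
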